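/- arXiv:2102.05154 — 8 statements merged into one kernel-verified Lean document; each statement's English description precedes it below -/
import Mathlib

section
/- Let L be a lattice of dimension n in ℝⁿ with n = 2 or n = 3, let (b₁, …, bₙ) be a Minkowski-reduced basis of L, let m be a minimum vector of L, and let x ∈ ℤⁿ be the (unique) integer coordinate vector with m = x₁b₁ + ⋯ + xₙbₙ. Then |xᵢ| ≤ 1 for every i ∈ {1, …, n}. -/
/-!
Write `a ≤ b ≤ c` for the squared norms of the basis vectors. Flipping the signs of basis vectors
preserves all the inequalities used, so the coordinates `x, y, z` of the minimum vector may be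
assumed nonnegative. With `p, q, r` the inner products of pairs of basis vectors, Minkowski
reduction gives `2p ≥ -a`, `2q ≥ -a`, `2r ≥ -b` and `2(p + q + r) ≥ -(a + b)`, the last one from
`‖b₁ + b₂ + b₃‖ ≥ ‖b₃‖`. The squared norm of `x b₁ + y b₂ + z b₃` is linear in `(p, q, r)` with
nonnegative coefficients, so it is minimal at a vertex of this polyhedron. If, say, `x` is the
largest coordinate, the vertex value is at least
`a (x² + y² + z² - xy - xz) = a ((x/2 - y)² + (x/2 - z)² + x²/2)`, which is `≥ 2a > a` as soon as
`x ≥ 2` (`quadForm_ge`). This contradicts `‖m‖ ≤ ‖b₁‖`. Dimension two is the case `z = q = r = 0`.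
-/

/-- The quadratic form of a reduced ternary Gram matrix, at a nonnegative point with a coordinate
at least two, exceeds the smallest diagonal entry. -/
theorem quadForm_ge {a b c p q r x y z : ℝ} (ha : 0 < a) (hab : a ≤ b) (hbc : b ≤ c)
    (hp : 0 ≤ a + 2 * p) (hq : 0 ≤ a + 2 * q) (hr : 0 ≤ b + 2 * r)
    (hpqr : 0 ≤ a + b + 2 * p + 2 * q + 2 * r) (hx : 0 ≤ x) (hy : 0 ≤ y) (hz : 0 ≤ z)
    (h2 : 2 ≤ x ∨ 2 ≤ y ∨ 2 ≤ z) :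
    a < a * x ^ 2 + b * y ^ 2 + c * z ^ 2
      + 2 * p * (x * y) + 2 * q * (x * z) + 2 * r * (y * z) := by
  have hc : 0 ≤ (c - b) * z ^ 2 := mul_nonneg (by linarith) (sq_nonneg z)
  -- Applied with `s` the largest coordinate and `t`, `u` the other two.
  have key : ∀ s t u : ℝ, 2 ≤ s → 2 * a ≤ a * (s ^ 2 + t ^ 2 + u ^ 2 - s * t - s * u) := by
    intro s t u hs
    have : 2 ≤ s ^ 2 + t ^ 2 + u ^ 2 - s * t - s * u := by
      nlinarith [sq_nonneg (s / 2 - t), sq_nonneg (s / 2 - u)]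
    nlinarith
  have hyz : 0 ≤ (b - a) * (y ^ 2 + z ^ 2 - y * z) :=
    mul_nonneg (by linarith) (by nlinarith [sq_nonneg (y - z), sq_nonneg (y + z)])
  have hmax : (y ≤ x ∧ z ≤ x) ∨ (x ≤ y ∧ z ≤ y) ∨ (x ≤ z ∧ y ≤ z) := by grind
  -- In each case `h1`, `h5`, `h6` combine the constraints active at the minimizing vertex.
  rcases hmax with ⟨hl, hl'⟩ | ⟨hl, hl'⟩ | ⟨hl, hl'⟩
  · have h1 := mul_nonneg (mul_nonneg hy hz) hpqr
    have h5 := mul_nonneg (mul_nonneg hy (sub_nonneg.2 hl')) hp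
    have h6 := mul_nonneg (mul_nonneg hz (sub_nonneg.2 hl)) hq
    have h4 := key x y z (by rcases h2 with h | h | h <;> linarith)
    nlinarith only [h1, h5, h6, h4, hc, hyz, ha]
  · have h1 := mul_nonneg (mul_nonneg hx hz) hpqr
    have h5 := mul_nonneg (mul_nonneg hx (sub_nonneg.2 hl')) hp
    have h6 := mul_nonneg (mul_nonneg hz (sub_nonneg.2 hl)) hr
    have h4 := key y x z (by rcases h2 with h | h | h <;> linarith)
    nlinarith only [h1, h5, h6, h4, hc, hyz, ha]
  · have h1 := mul_nonneg (mul_nonneg hx hy) hpqr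
    have h5 := mul_nonneg (mul_nonneg hx (sub_nonneg.2 hl')) hq
    have h6 := mul_nonneg (mul_nonneg hy (sub_nonneg.2 hl)) hr
    have h4 := key z x y (by rcases h2 with h | h | h <;> linarith)
    nlinarith only [h1, h5, h6, h4, hc, hyz, ha]

theorem gcd_filter_eq_one {n : ℕ} (i j : Fin n) (c : Fin n → ℤ) (hij : i ≤ j)
    (hc : IsUnit (c j)) : Finset.gcd (Finset.univ.filter fun j => i ≤ j) c = 1 := by
  have h : Finset.gcd (Finset.univ.filter fun j => i ≤ j) c ∣ c j :=
    Finset.gcd_dvd (by simpa using hij)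
  rw [← Finset.normalize_gcd]
  exact normalize_eq_one.2 (isUnit_of_dvd_unit h hc)

theorem exists_sign_mul_abs (k : ℤ) : ∃ s : ℤ, IsUnit s ∧ s * s = 1 ∧ k = s * |k| := by
  rcases abs_choice k with h | h
  · exact ⟨1, by simp, by simp, by simp [h]⟩
  · exact ⟨-1, by simp, by simp, by simp [h]⟩

theorem norm_sq_comb_two {E : Type*} [NormedAddCommGroup E] [InnerProductSpace ℝ E]
    (u v : E) (x y : ℝ) :
    ‖x • u + y • v‖ ^ 2 = ‖u‖ ^ 2 * x ^ 2 + ‖v‖ ^ 2 * y ^ 2 + 2 * inner ℝ u v * (x * y) := by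
  simp only [← real_inner_self_eq_norm_sq, inner_add_left, inner_add_right, real_inner_smul_left,
    real_inner_smul_right, real_inner_comm u v]
  ring

theorem norm_sq_comb_three {E : Type*} [NormedAddCommGroup E] [InnerProductSpace ℝ E]
    (u v w : E) (x y z : ℝ) :
    ‖x • u + y • v + z • w‖ ^ 2 = ‖u‖ ^ 2 * x ^ 2 + ‖v‖ ^ 2 * y ^ 2 + ‖w‖ ^ 2 * z ^ 2
      + 2 * inner ℝ u v * (x * y) + 2 * inner ℝ u w * (x * z) + 2 * inner ℝ v w * (y * z) := by
  simp only [← real_inner_self_eq_norm_sq, inner_add_left, inner_add_right, real_inner_smul_left,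
    real_inner_smul_right, real_inner_comm u v, real_inner_comm u w, real_inner_comm v w]
  ring

/-- In dimension n = 2 or 3, the coordinates of a minimum vector
with respect to a Minkowski-reduced basis have absolute value at most 1. -/
theorem minvec_coords_le_one_dim_two_three
    (n : ℕ) (hn : n = 2 ∨ n = 3)
    (b : Fin n → EuclideanSpace ℝ (Fin n)) (hb : LinearIndependent ℝ b)
    (L : Set (EuclideanSpace ℝ (Fin n)))
    (hL : L = {v | ∃ c : Fin n → ℤ, v = ∑ i, (c i : ℝ) • b i})
    (hred : ∀ (i : Fin n) (c : Fin n → ℤ),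
      Finset.gcd (Finset.univ.filter fun j => i ≤ j) c = 1 →
      ‖b i‖ ≤ ‖∑ j, (c j : ℝ) • b j‖)
    (m : EuclideanSpace ℝ (Fin n)) (hmL : m ∈ L) (hm0 : m ≠ 0)
    (hmin : ∀ w ∈ L, w ≠ 0 → ‖m‖ ≤ ‖w‖)
    (x : Fin n → ℤ) (hx : m = ∑ i, (x i : ℝ) • b i) :
    ∀ i : Fin n, |x i| ≤ 1 := by
  have hred' : ∀ (i j : Fin n) (c : Fin n → ℤ), i ≤ j → IsUnit (c j) →
      ‖b i‖ ^ 2 ≤ ‖∑ j, (c j : ℝ) • b j‖ ^ 2 := fun i j c hij hc =>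
    pow_le_pow_left₀ (norm_nonneg _) (hred i c (gcd_filter_eq_one i j c hij hc)) 2
  have hmb : ∀ i, ‖m‖ ^ 2 ≤ ‖b i‖ ^ 2 := fun i =>
    pow_le_pow_left₀ (norm_nonneg _) (hmin (b i)
      (by rw [hL]; exact ⟨Pi.single i 1, by simp [Pi.single_apply]⟩) (hb.ne_zero i)) 2
  have hpos : ∀ i, 0 < ‖b i‖ ^ 2 := fun i => pow_pos (norm_pos_iff.2 (hb.ne_zero i)) 2
  have habs : ∀ i, (0 : ℝ) ≤ (|x i| : ℤ) := fun i => by exact_mod_cast abs_nonneg (x i)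
  -- `s i` is the sign of `x i`; the form is examined in the basis `s i • b i`.
  choose s hsu hs2 hsx using fun i => exists_sign_mul_abs (x i)
  have hs2' : ∀ i, (s i : ℝ) ^ 2 = 1 := fun i => by rw [sq]; exact_mod_cast hs2 i
  have hsx' : ∀ i, (x i : ℝ) = s i * (|x i| : ℤ) := fun i => by exact_mod_cast hsx i
  rcases hn with rfl | rfl
  · have h0 := hmb 0
    have e01 := hred' 0 1 ![0, 1] (by decide) (by simp)
    have e1 := hred' 1 1 ![s 0, s 1] (by decide) (by simpa using hsu 1)
    rw [hx] at h0
    simp only [Fin.sum_univ_two, norm_sq_comb_two, Matrix.cons_val_zero, Matrix.cons_val_one,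
      hs2', Int.cast_zero, Int.cast_one] at h0 e01 e1
    rw [hsx' 0, hsx' 1, mul_pow, mul_pow, hs2', hs2'] at h0
    by_contra! hcon
    obtain ⟨i, hi⟩ := hcon
    have hi' : (2 : ℝ) ≤ (|x i| : ℤ) := by exact_mod_cast hi
    have := quadForm_ge (p := s 0 * s 1 * inner ℝ (b 0) (b 1)) (q := 0) (r := 0)
      (x := (|x 0| : ℤ)) (y := (|x 1| : ℤ)) (z := 0) (hpos 0) (b := ‖b 1‖ ^ 2)
      (c := ‖b 1‖ ^ 2) (by linarith) le_rfl (by linarith) (by linarith [hpos 0])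
      (by linarith [hpos 1]) (by linarith [hpos 1]) (habs 0) (habs 1) le_rfl
      (by fin_cases i; exacts [.inl hi', .inr (.inl hi')])
    linarith
  · have h0 := hmb 0
    have e01 := hred' 0 1 ![0, 1, 0] (by decide) (by simp)
    have e12 := hred' 1 2 ![0, 0, 1] (by decide) (by simp)
    have e1 := hred' 1 1 ![s 0, s 1, 0] (by decide) (by simpa using hsu 1)
    have e2 := hred' 2 2 ![s 0, 0, s 2] (by decide) (by simpa using hsu 2)
    have e3 := hred' 2 2 ![0, s 1, s 2] (by decide) (by simpa using hsu 2)
    have e4 := hred' 2 2 ![s 0, s 1, s 2] (by decide) (by simpa using hsu 2)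
    rw [hx] at h0
    simp only [Fin.sum_univ_three, norm_sq_comb_three, Matrix.cons_val,
      hs2', Int.cast_zero, Int.cast_one] at h0 e01 e12 e1 e2 e3 e4
    rw [hsx' 0, hsx' 1, hsx' 2, mul_pow, mul_pow, mul_pow, hs2', hs2', hs2'] at h0
    by_contra! hcon
    obtain ⟨i, hi⟩ := hcon
    have hi' : (2 : ℝ) ≤ (|x i| : ℤ) := by exact_mod_cast hi
    have := quadForm_ge (p := s 0 * s 1 * inner ℝ (b 0) (b 1))
      (q := s 0 * s 2 * inner ℝ (b 0) (b 2)) (r := s 1 * s 2 * inner ℝ (b 1) (b 2))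
      (x := (|x 0| : ℤ)) (y := (|x 1| : ℤ)) (z := (|x 2| : ℤ)) (hpos 0) (b := ‖b 1‖ ^ 2)
      (c := ‖b 2‖ ^ 2) (by linarith) (by linarith) (by linarith) (by linarith)
      (by linarith) (by linarith) (habs 0) (habs 1) (habs 2)
      (by fin_cases i; exacts [.inl hi', .inr (.inl hi'), .inr (.inr hi')])
    linarith
end

section
/- Let L be a lattice of dimension n in ℝⁿ with n = 4 or n = 5, let (b₁, …, bₙ) be a Minkowski-reduced basis of L, let m be a minimum vector of L, and let x ∈ ℤⁿ be the (unique) integer coordinate vector with m = x₁b₁ + ⋯ + xₙbₙ. Then |xᵢ| ≤ 2 for every i ∈ {1, …, n}. -/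
/-!
Suppose some coordinate of `m` has absolute value at least `3`; let `i` be the last such index and,
replacing `m` by `-m` if necessary, let `d = x i > 0`. Divide the coordinates by `d` with
remainders of least absolute value: `x j = d * q j + r j`, `2 |r j| ≤ d`, with `q i = 1`, `r i = 0`.
The lattice vector `e = ∑ q j b j` satisfies `d e = m - ∑ r j b j`, and Watson's identity (`watson`)
reads, with `N v = ‖v‖ ^ 2`,

`(1 + ∑ |r j| - 2 d) N e = (N (e - m) - N m) + ∑ |r j| (N (e + sign (r j) b j) - N (b j))`.

Minkowski reduction makes the summands on the right nonnegative whenever one coordinate of index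
`≥ j` of `e + sign (r j) b j` is a unit. As `q i = 1` and `|x j| ≤ 2` for `j > i`, this fails for at
most one `j`, and only if `d = 3`. In that exceptional case the summand exceeds `-N e`, while the
left side is at most `-N e` because there are at most four nonzero remainders `±1`.

Otherwise `1 + ∑ |r j| ≥ 2 d`, which with at most four remainders, each at most `d / 2` in absolute
value, forces `d = 2 h` with `h ≥ 2` and `∑ (h - |r j|) ≤ 1`. If all `|r j|` equal `h`, then `m` is
divisible by `h`, contradicting minimality. If exactly one of them, `|r k|`, is `h - 1`, then
`(m ± b k) / h` is a lattice vector shorter than `b k` whose coordinates from `k` on are coprime,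
contradicting reduction.
-/

/-! ### Integer combinations of a basis -/

/-- The lattice vector with integer coordinates `c` in the family `b`. -/
noncomputable def latticeComb {V : Type*} [AddCommGroup V] [Module ℝ V] {n : ℕ}
    (b : Fin n → V) (c : Fin n → ℤ) : V := ∑ j, (c j : ℝ) • b j

section LinearAlgebra

variable {V : Type*} [AddCommGroup V] [Module ℝ V] {n : ℕ} (b : Fin n → V)

lemma latticeComb_sub (c c' : Fin n → ℤ) :
    latticeComb b (c - c') = latticeComb b c - latticeComb b c' := by
  simp [latticeComb, sub_smul, Finset.sum_sub_distrib]

lemma latticeComb_smul (d : ℤ) (c : Fin n → ℤ) :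
    latticeComb b (fun j => d * c j) = (d : ℝ) • latticeComb b c := by
  simp [latticeComb, Finset.smul_sum, mul_smul]

lemma latticeComb_add_single (c : Fin n → ℤ) (k : Fin n) (z : ℤ) :
    latticeComb b (c + Pi.single k z) = latticeComb b c + (z : ℝ) • b k := by
  have h : ∀ j, (((Pi.single k z : Fin n → ℤ) j : ℤ) : ℝ) • b j
      = if j = k then (z : ℝ) • b k else 0 := by
    intro j
    by_cases hj : j = k
    · subst hj; simp
    · simp [hj]
  simp [latticeComb, add_smul, Finset.sum_add_distrib, h]

lemma latticeComb_ne_zero {b : Fin n → V} (hb : LinearIndependent ℝ b) {c : Fin n → ℤ}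
    (j : Fin n) (hc : c j ≠ 0) : latticeComb b c ≠ 0 := by
  intro h
  exact hc (by exact_mod_cast Fintype.linearIndependent_iff.1 hb (fun j => (c j : ℝ)) h j)

end LinearAlgebra

/-! ### Arithmetic of coordinates and Watson's identity -/

lemma tail_gcd_eq_one {n : ℕ} (i : Fin n) (c : Fin n → ℤ) (j k : Fin n) (hj : i ≤ j) (hk : i ≤ k)
    (h : IsCoprime (c j) (c k)) : Finset.gcd (Finset.univ.filter fun l => i ≤ l) c = 1 := by
  have h1 : Finset.gcd (Finset.univ.filter fun l => i ≤ l) c ∣ c j := Finset.gcd_dvd (by simpa)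
  have h2 : Finset.gcd (Finset.univ.filter fun l => i ≤ l) c ∣ c k := Finset.gcd_dvd (by simpa)
  have h3 := h.isUnit_of_dvd' h1 h2
  rw [← Finset.normalize_gcd]
  exact normalize_eq_one.2 h3

/-- Division with remainder of least absolute value; ties are resolved so that the quotient is `0`
whenever it can be. -/
lemma exists_balanced_quotient (x d : ℤ) (hd : 0 < d) :
    ∃ q r : ℤ, x = d * q + r ∧ 2 * |r| ≤ d ∧ (2 * |x| ≤ d → q = 0) := by
  by_cases h : 2 * |x| ≤ d
  · exact ⟨0, x, by ring, h, fun _ => rfl⟩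
  · have h1 := Int.emod_add_mul_ediv x d
    have h2 := Int.emod_nonneg x hd.ne'
    have h3 := Int.emod_lt_of_pos x hd
    by_cases h4 : 2 * (x % d) ≤ d
    · exact ⟨x / d, x % d, by linarith, by rwa [abs_of_nonneg h2], fun h' => absurd h' h⟩
    · refine ⟨x / d + 1, x % d - d, by linarith, ?_, fun h' => absurd h' h⟩
      rw [abs_of_neg (by linarith)]
      linarith

/-- Watson's identity, for a vector `e` with `d • e = m - ∑ r j • b j`. -/
lemma watson {V : Type*} [NormedAddCommGroup V] [InnerProductSpace ℝ V] {n : ℕ}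
    (b : Fin n → V) (e m : V) (d : ℝ) (r : Fin n → ℤ) (h : d • e = m - latticeComb b r) :
    (1 + ((∑ j, |r j| : ℤ) : ℝ) - 2 * d) * ‖e‖ ^ 2 = (‖e - m‖ ^ 2 - ‖m‖ ^ 2)
      + ∑ j, ((|r j| : ℤ) : ℝ) * (‖e + ((r j).sign : ℝ) • b j‖ ^ 2 - ‖b j‖ ^ 2) := by
  have h1 : ∀ j, ((|r j| : ℤ) : ℝ) * (‖e + ((r j).sign : ℝ) • b j‖ ^ 2 - ‖b j‖ ^ 2)
      = ((|r j| : ℤ) : ℝ) * ‖e‖ ^ 2 + 2 * ((r j : ℝ) * inner ℝ e (b j)) := by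
    intro j
    rw [norm_add_sq_real, norm_smul, inner_smul_right, mul_pow, Real.norm_eq_abs, sq_abs]
    rcases lt_trichotomy (r j) 0 with hr | hr | hr
    · rw [Int.sign_eq_neg_one_of_neg hr, abs_of_neg hr]; push_cast; ring
    · simp [hr]
    · rw [Int.sign_eq_one_of_pos hr, abs_of_pos hr]; push_cast; ring
  have h2 : ∑ j, (r j : ℝ) * inner ℝ e (b j) = inner ℝ e m - d * ‖e‖ ^ 2 := by
    have h3 : latticeComb b r = m - d • e := by rw [h]; abel
    have h4 : inner ℝ e (latticeComb b r) = ∑ j, (r j : ℝ) * inner ℝ e (b j) := by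
      simp [latticeComb, inner_sum, inner_smul_right]
    rw [← h4, h3, inner_sub_right, inner_smul_right, real_inner_self_eq_norm_sq]
  rw [Finset.sum_congr rfl fun j _ => h1 j, Finset.sum_add_distrib, ← Finset.sum_mul,
    ← Finset.mul_sum, h2, norm_sub_sq_real]
  push_cast
  ring

lemma sum_le_four_mul {n : ℕ} (hn : n ≤ 5) (i : Fin n) (f : Fin n → ℤ) (B : ℤ) (hB : 0 ≤ B)
    (hi : f i = 0) (hf : ∀ j, f j ≤ B) : ∑ j, f j ≤ 4 * B := by
  rw [← Finset.add_sum_erase _ _ (Finset.mem_univ i), hi, zero_add]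
  refine (Finset.sum_le_card_nsmul _ _ B fun j _ => hf j).trans ?_
  rw [Finset.card_erase_of_mem (Finset.mem_univ i), Finset.card_univ, Fintype.card_fin, nsmul_eq_mul]
  exact mul_le_mul_of_nonneg_right (by exact_mod_cast (by omega)) hB

/-! ### Excluding coordinates of absolute value at least three -/

/-- The even case `d = 2 h` in which the remainders are as large as possible up to a total
defect of `1`. -/
lemma no_large_remainders {V : Type*} [NormedAddCommGroup V] [InnerProductSpace ℝ V]
    {n : ℕ} (hn : n ≤ 5) (b : Fin n → V) (hb : LinearIndependent ℝ b)
    (hred : ∀ (i : Fin n) (c : Fin n → ℤ),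
      Finset.gcd (Finset.univ.filter fun j => i ≤ j) c = 1 → ‖b i‖ ≤ ‖latticeComb b c‖)
    (x : Fin n → ℤ)
    (hmin : ∀ c : Fin n → ℤ, (∃ j, c j ≠ 0) → ‖latticeComb b x‖ ≤ ‖latticeComb b c‖)
    (i : Fin n) (h : ℤ) (hh : 2 ≤ h) (hxi : x i = 2 * h) (q r : Fin n → ℤ)
    (hqr : ∀ j, x j = 2 * h * q j + r j) (hr : ∀ j, |r j| ≤ h) (hri : r i = 0)
    (hq : ∀ j, i < j → q j = 0) (hS : 4 * h - 1 ≤ ∑ j, |r j|) : False := by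
  by_cases hall : ∀ j, j ≠ i → |r j| = h
  · -- every coordinate of the minimum vector is divisible by `h`
    have hdvd : ∀ j, ∃ y, x j = h * y := by
      intro j
      by_cases hj : j = i
      · exact ⟨2, by rw [hj, hxi]; ring⟩
      · have h1 : h ∣ r j := (dvd_abs _ _).1 (dvd_of_eq (hall j hj).symm)
        obtain ⟨y, hy⟩ := h1
        exact ⟨2 * q j + y, by rw [hqr j, hy]; ring⟩
    choose y hy using hdvd
    have hyi : y i ≠ 0 := by
      intro h0
      have := hy i
      rw [h0, hxi] at this
      linarith
    have h1 : latticeComb b x = (h : ℝ) • latticeComb b y := by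
      rw [← latticeComb_smul]; congr 1; funext j; exact hy j
    have h2 := hmin y ⟨i, hyi⟩
    have h3 : 0 < ‖latticeComb b y‖ := norm_pos_iff.2 (latticeComb_ne_zero hb i hyi)
    have h4 : (2 : ℝ) ≤ h := by exact_mod_cast hh
    rw [h1, norm_smul, Real.norm_eq_abs, abs_of_pos (by linarith)] at h2
    nlinarith
  · push Not at hall
    obtain ⟨k, hki, hk⟩ := hall
    have hk1 : |r k| ≤ h - 1 := by have := hr k; omega
    -- the defects `h - |r j|`, `j ≠ i`, add up to at most `1`
    have hrest : ∀ l, l ≠ i → l ≠ k → (h - |r l|) + (h - |r k|) ≤ 1 := by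
      intro l hli hlk
      have h1 := Finset.add_sum_erase Finset.univ (fun j => |r j|) (Finset.mem_univ i)
      have hkm : k ∈ Finset.univ.erase i := by simp [hki]
      have h2 := Finset.add_sum_erase (Finset.univ.erase i) (fun j => |r j|) hkm
      have hlm : l ∈ (Finset.univ.erase i).erase k := by simp [hli, hlk]
      have h3 := Finset.add_sum_erase ((Finset.univ.erase i).erase k) (fun j => |r j|) hlm
      have h4 := Finset.sum_le_card_nsmul (((Finset.univ.erase i).erase k).erase l)
        (fun j => |r j|) h (fun j _ => hr j)
      rw [Finset.card_erase_of_mem hlm, Finset.card_erase_of_mem hkm,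
        Finset.card_erase_of_mem (Finset.mem_univ i), Finset.card_univ, Fintype.card_fin,
        nsmul_eq_mul] at h4
      have h5 : (((n - 1 - 1 - 1 : ℕ) : ℤ)) * h ≤ 2 * h :=
        mul_le_mul_of_nonneg_right (by exact_mod_cast (by omega)) (by omega)
      simp only [hri, abs_zero, zero_add] at h1 h2 h3
      linarith
    have hk2 : h - 1 ≤ |r k| := by
      have h1 := Finset.add_sum_erase Finset.univ (fun j => |r j|) (Finset.mem_univ k)
      have h2 := Finset.add_sum_erase (Finset.univ.erase k) (fun j => |r j|)
        (a := i) (by simp [Ne.symm hki])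
      have h4 := Finset.sum_le_card_nsmul ((Finset.univ.erase k).erase i)
        (fun j => |r j|) h (fun j _ => hr j)
      rw [Finset.card_erase_of_mem (by simp [Ne.symm hki]),
        Finset.card_erase_of_mem (Finset.mem_univ k), Finset.card_univ, Fintype.card_fin,
        nsmul_eq_mul] at h4
      have h5 : (((n - 1 - 1 : ℕ) : ℤ)) * h ≤ 3 * h :=
        mul_le_mul_of_nonneg_right (by exact_mod_cast (by omega)) (by omega)
      simp only [hri, abs_zero, zero_add] at h1 h2
      linarith
    have hkk : |r k| = h - 1 := le_antisymm hk1 hk2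
    obtain ⟨s, hs, hrk⟩ : ∃ s : ℤ, (s = 1 ∨ s = -1) ∧ r k = s * (h - 1) := by
      rcases abs_choice (r k) with h1 | h1
      · exact ⟨1, Or.inl rfl, by linarith⟩
      · exact ⟨-1, Or.inr rfl, by linarith⟩
    have hdvd : ∀ j, ∃ y, (x + Pi.single k s : Fin n → ℤ) j = h * y ∧ (j = i → y = 2) ∧
        (j = k → y = 2 * q k + s) := by
      intro j
      by_cases hj : j = i
      · refine ⟨2, ?_, fun _ => rfl, fun hjk => absurd (hjk.symm.trans hj) hki⟩
        rw [hj, Pi.add_apply, Pi.single_eq_of_ne (Ne.symm hki), hxi]; ring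
      · by_cases hjk : j = k
        · refine ⟨2 * q k + s, ?_, fun h' => absurd h' hj, fun _ => rfl⟩
          rw [hjk, Pi.add_apply, Pi.single_eq_same, hqr, hrk]; ring
        · have h1 : |r j| = h := by have := hrest j hj hjk; have := hr j; omega
          have h1 : h ∣ r j := (dvd_abs _ _).1 (dvd_of_eq h1.symm)
          obtain ⟨y, hy⟩ := h1
          refine ⟨2 * q j + y, ?_, fun h' => absurd h' hj, fun h' => absurd h' hjk⟩
          rw [Pi.add_apply, Pi.single_eq_of_ne hjk, hqr, hy]; ring
    choose w hw hwi hwk using hdvd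
    have hwi := hwi i rfl
    have hwk := hwk k rfl
    have hcop : Finset.gcd (Finset.univ.filter fun j => k ≤ j) w = 1 := by
      rcases lt_or_gt_of_ne hki with hlt | hlt
      · apply tail_gcd_eq_one k w k i le_rfl hlt.le
        rw [hwi, hwk]
        rcases hs with rfl | rfl
        · exact ⟨1, - q k, by ring⟩
        · exact ⟨-1, q k, by ring⟩
      · apply tail_gcd_eq_one k w k k le_rfl le_rfl
        rw [hwk, hq k hlt]
        rcases hs with rfl | rfl
        · exact ⟨1, 0, by ring⟩
        · exact ⟨-1, 0, by ring⟩
    have h1 : latticeComb b x + (s : ℝ) • b k = (h : ℝ) • latticeComb b w := by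
      rw [← latticeComb_smul, ← latticeComb_add_single]; congr 1; funext j; exact hw j
    have h2 := hred k w hcop
    have h0 : ∀ z : ℤ, latticeComb b (0 + Pi.single k z) = (z : ℝ) • b k := by
      intro z
      rw [latticeComb_add_single]; simp [latticeComb]
    have h3 : ‖latticeComb b x‖ ≤ ‖b k‖ := by
      have := hmin (0 + Pi.single k 1) ⟨k, by simp⟩
      rw [h0] at this
      simpa using this
    have h4 : 0 < ‖latticeComb b x - (s : ℝ) • b k‖ := by
      rw [norm_pos_iff, ← h0, ← latticeComb_sub]
      apply latticeComb_ne_zero hb i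
      rw [Pi.sub_apply, Pi.add_apply, Pi.single_eq_of_ne (Ne.symm hki), hxi, Pi.zero_apply]
      omega
    have h5 := parallelogram_law_with_norm ℝ (latticeComb b x) ((s : ℝ) • b k)
    have h6 : ‖(s : ℝ) • b k‖ = ‖b k‖ := by rcases hs with rfl | rfl <;> simp
    have h7 : (2 : ℝ) ≤ h := by exact_mod_cast hh
    rw [h1, h6, norm_smul, Real.norm_eq_abs, abs_of_pos (by linarith : (0 : ℝ) < h)] at h5
    have h8 : 2 * ‖b k‖ ≤ h * ‖latticeComb b w‖ :=
      mul_le_mul h7 h2 (norm_nonneg _) (by linarith)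
    have := norm_nonneg (b k)
    have := norm_nonneg (latticeComb b x)
    nlinarith

/-- The contradiction from a last coordinate of absolute value at least `3`, normalised to be
positive. -/
lemma no_last_large_coord {V : Type*} [NormedAddCommGroup V] [InnerProductSpace ℝ V]
    {n : ℕ} (hn : n ≤ 5) (b : Fin n → V) (hb : LinearIndependent ℝ b)
    (hred : ∀ (i : Fin n) (c : Fin n → ℤ),
      Finset.gcd (Finset.univ.filter fun j => i ≤ j) c = 1 → ‖b i‖ ≤ ‖latticeComb b c‖)
    (x : Fin n → ℤ)
    (hmin : ∀ c : Fin n → ℤ, (∃ j, c j ≠ 0) → ‖latticeComb b x‖ ≤ ‖latticeComb b c‖)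
    (i : Fin n) (hxi : 3 ≤ x i) (hlast : ∀ j, i < j → |x j| ≤ 2) : False := by
  have hex : ∀ j, ∃ q r : ℤ, x j = x i * q + r ∧ 2 * |r| ≤ x i ∧
      (j ≠ i → 2 * |x j| ≤ x i → q = 0) ∧ (j = i → q = 1 ∧ r = 0) := by
    intro j
    by_cases hj : j = i
    · exact ⟨1, 0, by rw [hj]; ring, by simp; omega, fun h => absurd hj h, fun _ => ⟨rfl, rfl⟩⟩
    · obtain ⟨q, r, h1, h2, h3⟩ := exists_balanced_quotient (x j) (x i) (by omega)
      exact ⟨q, r, h1, h2, fun _ => h3, fun h => absurd h hj⟩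
  choose q r hqr hr hq0 hqi using hex
  obtain ⟨hqi, hri⟩ := hqi i rfl
  have hde : (x i : ℝ) • latticeComb b q = latticeComb b x - latticeComb b r := by
    rw [← latticeComb_smul, ← latticeComb_sub]; congr 1; funext j
    rw [Pi.sub_apply, hqr j]; ring
  have hW := watson b _ _ _ r hde
  set e := latticeComb b q with he
  have hepos : 0 < ‖e‖ := norm_pos_iff.2 (latticeComb_ne_zero hb i (by rw [hqi]; decide))
  have hme : 0 ≤ ‖e - latticeComb b x‖ ^ 2 - ‖latticeComb b x‖ ^ 2 := by
    have h1 := hmin (q - x) ⟨i, by rw [Pi.sub_apply, hqi]; omega⟩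
    rw [latticeComb_sub] at h1
    exact sub_nonneg.2 (pow_le_pow_left₀ (norm_nonneg _) h1 2)
  -- the `j`-th summand is nonnegative as soon as the shifted vector has a unit coordinate from `j` on
  have hgood : ∀ j l, j ≤ l → IsUnit ((q + Pi.single j (r j).sign : Fin n → ℤ) l) →
      0 ≤ ((|r j| : ℤ) : ℝ) * (‖e + ((r j).sign : ℝ) • b j‖ ^ 2 - ‖b j‖ ^ 2) := by
    intro j l hjl hu
    have h1 := hred j (q + Pi.single j (r j).sign)
      (tail_gcd_eq_one j _ l l hjl hjl (isCoprime_self.2 hu))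
    rw [latticeComb_add_single] at h1
    exact mul_nonneg (by exact_mod_cast abs_nonneg _)
      (sub_nonneg.2 (pow_le_pow_left₀ (norm_nonneg _) h1 2))
  have hgood' : ∀ j, j ≤ i ∨ q j = 0 →
      0 ≤ ((|r j| : ℤ) : ℝ) * (‖e + ((r j).sign : ℝ) • b j‖ ^ 2 - ‖b j‖ ^ 2) := by
    intro j hj
    by_cases hrj : r j = 0
    · simp [hrj]
    · rcases hj with hj | hj
      · have hji : i ≠ j := by rintro rfl; exact hrj hri
        apply hgood j i hj
        rw [Pi.add_apply, Pi.single_eq_of_ne hji, hqi]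
        simp
      · apply hgood j j le_rfl
        rw [Pi.add_apply, Pi.single_eq_same, hj, zero_add]
        rcases lt_or_gt_of_ne hrj with h | h
        · rw [Int.sign_eq_neg_one_of_neg h]; exact isUnit_one.neg
        · rw [Int.sign_eq_one_of_pos h]; exact isUnit_one
  by_cases hA : ∀ j, i < j → q j = 0
  · have hsum := Finset.sum_nonneg fun j (_ : j ∈ Finset.univ) => hgood' j
      ((le_or_gt j i).imp id (hA j))
    have h1 : (0 : ℝ) ≤ 1 + ((∑ j, |r j| : ℤ) : ℝ) - 2 * (x i : ℝ) := by
      by_contra hneg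
      push Not at hneg
      have := mul_neg_of_neg_of_pos hneg (pow_pos hepos 2)
      linarith
    have h2 : 0 ≤ 1 + (∑ j, |r j|) - 2 * x i := by exact_mod_cast h1
    rcases Int.even_or_odd' (x i) with ⟨h, hh | hh⟩
    · refine no_large_remainders hn b hb hred x hmin i h (by omega) hh q r ?_ ?_ hri hA (by omega)
      · intro j; rw [← hh]; exact hqr j
      · intro j; have := hr j; omega
    · have := sum_le_four_mul hn i (fun j => |r j|) h (by omega) (by simp [hri])
        (fun j => by have := hr j; omega)
      omega
  · -- the last nonzero quotient, at an index `k > i`, exists only for `d = 3`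
    push Not at hA
    obtain ⟨j1, hj1, hqj1⟩ := hA
    obtain ⟨k, hk, hkmax⟩ := (Finset.univ.filter fun j => q j ≠ 0).exists_max_image id
      ⟨j1, by simpa using hqj1⟩
    have hqk : q k ≠ 0 := by simpa using hk
    have hafter : ∀ j, k < j → q j = 0 := by
      intro j hj
      by_contra hne
      exact absurd (hkmax j (by simpa using hne)) (not_le.2 hj)
    have hik : i < k := lt_of_lt_of_le hj1 (hkmax j1 (by simpa using hqj1))
    have h3 : x i = 3 := by
      by_contra hne
      exact hqk (hq0 k hik.ne' (by have := hlast k hik; omega))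
    have hrle : ∀ j, |r j| ≤ 1 := fun j => by have := hr j; omega
    have hqku : IsUnit (q k) := by
      have h4 := abs_le.1 (hrle k)
      have h5 := abs_le.1 (hlast k hik)
      have h6 := hqr k
      rw [h3] at h6
      rw [Int.isUnit_iff]
      omega
    have hS := sum_le_four_mul hn i (fun j => |r j|) 1 (by omega) (by simp [hri]) hrle
    have hek : ‖b k‖ ≤ ‖e‖ :=
      hred k q (tail_gcd_eq_one k _ k k le_rfl le_rfl (isCoprime_self.2 hqku))
    have hrest : 0 ≤ ∑ j ∈ Finset.univ.erase k,
        ((|r j| : ℤ) : ℝ) * (‖e + ((r j).sign : ℝ) • b j‖ ^ 2 - ‖b j‖ ^ 2) := by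
      refine Finset.sum_nonneg fun j hj => ?_
      have hjk : j ≠ k := (Finset.mem_erase.1 hj).1
      rcases lt_or_gt_of_ne hjk with hlt | hlt
      · apply hgood j k hlt.le
        rwa [Pi.add_apply, Pi.single_eq_of_ne (Ne.symm hjk), add_zero]
      · exact hgood' j (Or.inr (hafter j hlt))
    have hshift : 0 < ‖e + ((r k).sign : ℝ) • b k‖ := by
      rw [norm_pos_iff, ← latticeComb_add_single]
      apply latticeComb_ne_zero hb i
      rw [Pi.add_apply, Pi.single_eq_of_ne hik.ne, hqi]
      decide
    have hterm : -‖e‖ ^ 2 <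
        ((|r k| : ℤ) : ℝ) * (‖e + ((r k).sign : ℝ) • b k‖ ^ 2 - ‖b k‖ ^ 2) := by
      have h5 : ‖b k‖ ^ 2 ≤ ‖e‖ ^ 2 := pow_le_pow_left₀ (norm_nonneg _) hek 2
      have h6 := pow_pos hshift 2
      have h7 := pow_pos hepos 2
      have h8 : |r k| = 0 ∨ |r k| = 1 := by have := hrle k; have := abs_nonneg (r k); omega
      rcases h8 with h8 | h8
      · rw [h8]; simpa using h7
      · rw [h8]; push_cast; linarith
    have hsplit := Finset.add_sum_erase Finset.univ
      (fun j => ((|r j| : ℤ) : ℝ) * (‖e + ((r j).sign : ℝ) • b j‖ ^ 2 - ‖b j‖ ^ 2))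
      (Finset.mem_univ k)
    have hS' : ((∑ j, |r j| : ℤ) : ℝ) ≤ 4 := by exact_mod_cast hS
    have hleft : (1 + ((∑ j, |r j| : ℤ) : ℝ) - 2 * (x i : ℝ)) * ‖e‖ ^ 2 ≤ -1 * ‖e‖ ^ 2 := by
      refine mul_le_mul_of_nonneg_right ?_ (sq_nonneg _)
      rw [h3]
      push_cast at hS' ⊢
      linarith
    linarith

/-- In dimension n = 4 or 5, the coordinates of a minimum vector
with respect to a Minkowski-reduced basis have absolute value at most 2. -/
theorem minvec_coords_le_two_dim_four_five
    (n : ℕ) (hn : n = 4 ∨ n = 5)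
    (b : Fin n → EuclideanSpace ℝ (Fin n)) (hb : LinearIndependent ℝ b)
    (L : Set (EuclideanSpace ℝ (Fin n)))
    (hL : L = {v | ∃ c : Fin n → ℤ, v = ∑ i, (c i : ℝ) • b i})
    (hred : ∀ (i : Fin n) (c : Fin n → ℤ),
      Finset.gcd (Finset.univ.filter fun j => i ≤ j) c = 1 →
      ‖b i‖ ≤ ‖∑ j, (c j : ℝ) • b j‖)
    (m : EuclideanSpace ℝ (Fin n)) (hmL : m ∈ L) (hm0 : m ≠ 0)
    (hmin : ∀ w ∈ L, w ≠ 0 → ‖m‖ ≤ ‖w‖)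
    (x : Fin n → ℤ) (hx : m = ∑ i, (x i : ℝ) • b i) :
    ∀ i : Fin n, |x i| ≤ 2 := by
  have hn5 : n ≤ 5 := by omega
  have hmin' : ∀ c : Fin n → ℤ, (∃ j, c j ≠ 0) → ‖latticeComb b x‖ ≤ ‖latticeComb b c‖ := by
    rintro c ⟨j, hj⟩
    have h1 := hmin (latticeComb b c) (by rw [hL]; exact ⟨c, rfl⟩) (latticeComb_ne_zero hb j hj)
    rwa [hx] at h1
  by_contra hcon
  push Not at hcon
  obtain ⟨i0, hi0⟩ := hcon
  obtain ⟨i, hi, himax⟩ := (Finset.univ.filter fun j => 2 < |x j|).exists_max_image id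
    ⟨i0, by simpa using hi0⟩
  have hxi : 2 < |x i| := by simpa using hi
  have hlast : ∀ j, i < j → |x j| ≤ 2 := by
    intro j hj
    by_contra hne
    exact absurd (himax j (by simpa using hne)) (not_le.2 hj)
  rcases lt_abs.1 hxi with h | h
  · exact no_last_large_coord hn5 b hb hred x hmin' i h hlast
  · refine no_last_large_coord hn5 b hb hred (-x) ?_ i h (fun j hj => by simpa using hlast j hj)
    intro c hc
    have h1 : latticeComb b (-x) = -latticeComb b x := by simp [latticeComb]
    rw [h1, norm_neg]
    exact hmin' c hc
end

section
/- Let L be a lattice of dimension 6 in ℝ⁶, let (b₁, …, b₆) be a Minkowski-reduced basis of L, let m be a minimum vector of L, and let x ∈ ℤ⁶ be the (unique) integer coordinate vector with m = x₁b₁ + ⋯ + x₆b₆. Then |xᵢ| ≤ 3 for every i ∈ {1, …, 6}. -/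
/-!
Write `N` for the squared norm of the minimum vector `m = ∑ xⱼ bⱼ`, and suppose `d = xₖ ≥ 4`.
The vectors `m` and `bⱼ` (`j ≠ k`) span a sublattice of index `d` with cyclic quotient. The coset
of `u bₖ` contains `v = (∑ yⱼ fⱼ) / d`, where `f` is the basis of the sublattice and the `yⱼ` are
residues of smallest absolute value. Watson's identity
`∑ |yⱼ| (‖v - sgn(yⱼ) fⱼ‖² - ‖fⱼ‖²) = (∑ |yⱼ| - 2d) ‖v‖²` (`watson_identity`) shows that
`2d ≤ ∑ ρⱼ |yⱼ|` as soon as `‖fⱼ‖² ≤ ρⱼ ‖w‖²` for all lattice vectors `w` outside the sublattice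
(`watson_bound`). On the other hand each `|yⱼ|` has mean at most `d / 4` as `u` runs through the
residues modulo `d` (`sum_abs_bmod_le`). Hence `∑ ρⱼ ≤ 13/2` is impossible for `d ≥ 5`
(`lt_five_of_bound`), and `d = 4` leaves very few patterns of residues.

If all `bⱼ` with `xⱼ ≠ 0` are minimum vectors, one may take `ρ = 1`; for `d = 4` four of the `yⱼ`
are then `±1` and two are `±2`, and such a configuration does not exist (`minimal_case`).

In general let `l` be the last index with `xₗ ≠ 0`. Randomly rounding the coordinates of `w / g`
(`exists_rounding`) shows that `bⱼ` is at most as long as any lattice vector outside the span of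
its predecessors for the first four basis vectors, and that the factor `5/4` suffices for the
squared norm of the fifth. So `∑ ρⱼ = 25/4` is available when `k = l`. Combined with the equality
case of Watson's identity for `|xₗ| ∈ {3, 4}`, this shows that `|xₗ| ≥ 3` forces `bₗ` to be a
minimum vector (`IsRed.last_le`), as does `|xₗ| = 1` trivially. There remains `|xₗ| = 2`. Then
`bⱼ` is a minimum vector whenever `xⱼ` is odd, and rounding `m / 2` gives `‖bₗ‖² ≤ (1 + t) N / 4`
with `t` the number of odd coordinates. Either `bₗ` is a minimum vector or `t ∈ {4, 5}`, and in
both of the latter cases `∑ ρⱼ = 13/2` is available (`IsRed.coord_le_three`).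
-/

/-! ### Two averaging arguments in an inner product space -/

/-- Watson's identity: expand each squared norm and use `∑ yⱼ ⟪v, fⱼ⟫ = d ‖v‖²`. -/
theorem watson_identity {ι E : Type*} [Fintype ι] [NormedAddCommGroup E] [InnerProductSpace ℝ E]
    (f : ι → E) (y : ι → ℤ) (v : E) (d : ℤ) (h : (d : ℝ) • v = ∑ j, (y j : ℝ) • f j) :
    ∑ j, |(y j : ℝ)| * (‖v - ((y j).sign : ℝ) • f j‖ ^ 2 - ‖f j‖ ^ 2)
      = (∑ j, |(y j : ℝ)| - 2 * d) * ‖v‖ ^ 2 := by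
  have hterm : ∀ j, |(y j : ℝ)| * (‖v - ((y j).sign : ℝ) • f j‖ ^ 2 - ‖f j‖ ^ 2)
      = |(y j : ℝ)| * ‖v‖ ^ 2 - 2 * inner ℝ v ((y j : ℝ) • f j) := by
    intro j
    rw [norm_sub_sq_real, norm_smul, inner_smul_right, inner_smul_right]
    rcases lt_trichotomy (y j) 0 with hj | hj | hj
    · have h' : (y j : ℝ) < 0 := by exact_mod_cast hj
      rw [Int.sign_eq_neg_one_of_neg hj, abs_of_neg h']
      push_cast
      simp only [norm_neg, norm_one]
      ring
    · simp [hj]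
    · have h' : (0 : ℝ) < y j := by exact_mod_cast hj
      rw [Int.sign_eq_one_of_pos hj, abs_of_pos h']
      push_cast
      simp only [norm_one]
      ring
  simp_rw [hterm]
  rw [Finset.sum_sub_distrib, ← Finset.mul_sum, ← inner_sum, ← h, inner_smul_right,
    real_inner_self_eq_norm_sq, ← Finset.sum_mul]
  ring

/-- Rounding each `t j` up with probability `fract (t j)`, independently, adds the variances
`fract (t j) * (1 - fract (t j))` times `‖f j‖²` to `‖z‖²` on average; some outcome is at most this
average. -/
theorem exists_rounding {ι E : Type*} [DecidableEq ι] [NormedAddCommGroup E]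
    [InnerProductSpace ℝ E] (f : ι → E) (t : ι → ℝ) (s : Finset ι) (z : E) :
    ∃ c : ι → ℤ, ‖z + ∑ j ∈ s, ((t j : ℝ) - c j) • f j‖ ^ 2
      ≤ ‖z‖ ^ 2 + ∑ j ∈ s, Int.fract (t j) * (1 - Int.fract (t j)) * ‖f j‖ ^ 2 := by
  induction s using Finset.induction_on with
  | empty => exact ⟨fun _ => 0, by simp⟩
  | insert a s ha ih =>
    obtain ⟨c, hc⟩ := ih
    set v := z + ∑ j ∈ s, ((t j : ℝ) - c j) • f j with hv
    have hsum : ∀ n : ℤ, z + ∑ j ∈ insert a s, ((t j : ℝ) - (Function.update c a n) j) • f j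
        = v + (t a - n) • f a := by
      intro n
      rw [Finset.sum_insert ha, Function.update_self, hv]
      have : ∑ j ∈ s, ((t j : ℝ) - (Function.update c a n) j) • f j
          = ∑ j ∈ s, ((t j : ℝ) - c j) • f j := by
        refine Finset.sum_congr rfl fun j hj => ?_
        rw [Function.update_of_ne (ne_of_mem_of_not_mem hj ha)]
      rw [this]
      abel
    rw [Finset.sum_insert ha]
    set p := Int.fract (t a) with hp
    have hp0 : 0 ≤ p := Int.fract_nonneg _
    have hp1 : p < 1 := Int.fract_lt_one _
    have hta : t a = ⌊t a⌋ + p := (Int.floor_add_fract _).symm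
    have e1 : ‖v + p • f a‖ ^ 2 = ‖v‖ ^ 2 + 2 * p * inner ℝ v (f a) + p ^ 2 * ‖f a‖ ^ 2 := by
      rw [norm_add_sq_real, inner_smul_right, norm_smul, mul_pow, Real.norm_eq_abs, sq_abs]; ring
    have e2 : ‖v + (p - 1) • f a‖ ^ 2
        = ‖v‖ ^ 2 + 2 * (p - 1) * inner ℝ v (f a) + (p - 1) ^ 2 * ‖f a‖ ^ 2 := by
      rw [norm_add_sq_real, inner_smul_right, norm_smul, mul_pow, Real.norm_eq_abs, sq_abs]; ring
    by_cases hi : inner ℝ v (f a) * 2 ≤ (1 - 2 * p) * ‖f a‖ ^ 2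
    · refine ⟨Function.update c a ⌊t a⌋, ?_⟩
      rw [hsum, show t a - (⌊t a⌋ : ℝ) = p by linarith, e1]
      nlinarith [mul_le_mul_of_nonneg_left hi hp0]
    · refine ⟨Function.update c a (⌊t a⌋ + 1), ?_⟩
      rw [hsum, show t a - ((⌊t a⌋ + 1 : ℤ) : ℝ) = p - 1 by push_cast; linarith, e2]
      push Not at hi
      nlinarith [mul_le_mul_of_nonneg_left hi.le (sub_nonneg.2 hp1.le)]

theorem fract_mul_le (t : ℝ) : Int.fract t * (1 - Int.fract t) ≤ 1 / 4 := by
  nlinarith [sq_nonneg (Int.fract t - 1 / 2)]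

/-! ### Symmetric residues -/

theorem abs_bmod (z : ℤ) (d : ℕ) (hd : 0 < d) : |z.bmod d| = min (z % d) (d - z % d) := by
  have h0 := Int.emod_nonneg z (show (d : ℤ) ≠ 0 by omega)
  have h1 := Int.emod_lt_of_pos z (show (0 : ℤ) < d by omega)
  rw [Int.bmod_def]
  split_ifs with h
  · rw [abs_of_nonneg h0, min_eq_left (by omega)]
  · rw [abs_of_neg (by omega), min_eq_right (by omega)]
    ring

theorem sum_min_le (r : ℕ) : 4 * ∑ i ∈ Finset.range r, min i (r - i) ≤ r ^ 2 := by
  induction r using Nat.twoStepInduction with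
  | zero => simp
  | one => simp
  | more r ih _ =>
    have : ∑ i ∈ Finset.range (r + 2), min i (r + 2 - i)
        = (∑ i ∈ Finset.range r, min i (r - i)) + (r + 1) := by
      rw [Finset.sum_range_succ']
      have h : ∀ i ∈ Finset.range (r + 1), min (i + 1) (r + 2 - (i + 1)) = min i (r - i) + 1 := by
        intro i hi
        have := Finset.mem_range.1 hi
        omega
      rw [Finset.sum_congr rfl h, Finset.sum_add_distrib, Finset.sum_range_succ]
      simp
    rw [this]
    nlinarith

theorem sum_range_mul_periodic (F : ℕ → ℤ) (r : ℕ) (hF : Function.Periodic F r) (g : ℕ) :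
    ∑ u ∈ Finset.range (g * r), F u = g * ∑ u ∈ Finset.range r, F u := by
  induction g with
  | zero => simp
  | succ g ih =>
    have h : ∀ i, F (g * r + i) = F i := fun i => by
      rw [add_comm]; exact hF.nat_mul g i
    rw [Nat.succ_mul, Finset.sum_range_add, ih]
    simp_rw [h]
    push_cast
    ring

theorem sum_abs_bmod_le_of_coprime (a : ℤ) (r : ℕ) (hr : 0 < r) (ha : IsCoprime a (r : ℤ)) :
    4 * ∑ u ∈ Finset.range r, |((u : ℤ) * a).bmod r| ≤ (r : ℤ) ^ 2 := by
  have hr' : (0 : ℤ) < r := by exact_mod_cast hr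
  have hval : ∀ u : ℕ, ((((u : ℤ) * a) % r).toNat : ℤ) = ((u : ℤ) * a) % r := fun u =>
    Int.toNat_of_nonneg (Int.emod_nonneg _ hr'.ne')
  have hinj : Set.InjOn (fun u : ℕ => (((u : ℤ) * a) % r).toNat) (Finset.range r) := by
    intro u hu v hv huv
    have h1 : ((u : ℤ) * a) % r = ((v : ℤ) * a) % r := by
      rw [← hval u, ← hval v]; exact_mod_cast huv
    have h2 : (r : ℤ) ∣ ((u : ℤ) - v) * a := by
      rw [sub_mul]; exact Int.ModEq.dvd (Int.ModEq.symm h1)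
    have h3 : (r : ℤ) ∣ (u : ℤ) - v := ha.symm.dvd_of_dvd_mul_right h2
    have hu' := Finset.mem_range.1 (Finset.mem_coe.1 hu)
    have hv' := Finset.mem_range.1 (Finset.mem_coe.1 hv)
    have h4 := Int.eq_zero_of_abs_lt_dvd h3 (by rw [abs_lt]; constructor <;> omega)
    omega
  have himg : (Finset.range r).image (fun u : ℕ => (((u : ℤ) * a) % r).toNat)
      = Finset.range r := by
    refine Finset.eq_of_subset_of_card_le ?_ (by rw [Finset.card_image_of_injOn hinj])
    intro w hw
    obtain ⟨u, -, rfl⟩ := Finset.mem_image.1 hw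
    have := Int.emod_lt_of_pos ((u : ℤ) * a) hr'
    have := hval u
    rw [Finset.mem_range]
    omega
  have hsum : ∑ u ∈ Finset.range r, |((u : ℤ) * a).bmod r|
      = ((∑ i ∈ Finset.range r, min i (r - i) : ℕ) : ℤ) := by
    conv_rhs => rw [← himg, Finset.sum_image hinj]
    push_cast
    refine Finset.sum_congr rfl fun u _ => ?_
    have := Int.emod_lt_of_pos ((u : ℤ) * a) hr'
    have h := hval u
    rw [abs_bmod _ _ hr, Nat.cast_sub (by omega), h]
  rw [hsum]
  exact_mod_cast sum_min_le r

/-- The symmetric residues of the multiples of `a` modulo `d` have mean absolute value at most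
`d / 4`; this follows from the coprime case on dividing `a` and `d` by their gcd. -/
theorem sum_abs_bmod_le (a : ℤ) (d : ℕ) (hd : 0 < d) :
    4 * ∑ u ∈ Finset.range d, |((u : ℤ) * a).bmod d| ≤ (d : ℤ) ^ 2 := by
  have hg : 0 < Int.gcd a d := Int.gcd_pos_of_ne_zero_right _ (by omega)
  obtain ⟨g, hgdef⟩ : ∃ g, g = Int.gcd a d := ⟨_, rfl⟩
  rw [← hgdef] at hg
  obtain ⟨r, rfl⟩ : g ∣ d := by
    have := Int.gcd_dvd_right a d
    rw [← hgdef] at this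
    exact_mod_cast this
  obtain ⟨a', rfl⟩ : (g : ℤ) ∣ a := by rw [hgdef]; exact Int.gcd_dvd_left _ _
  have hr : 0 < r := Nat.pos_of_mul_pos_left hd
  have hcop : IsCoprime a' (r : ℤ) := by
    rw [Int.isCoprime_iff_gcd_eq_one]
    push_cast at hgdef
    rw [Int.gcd_mul_left, Int.natAbs_natCast] at hgdef
    exact Nat.eq_of_mul_eq_mul_left hg (by omega)
  have hterm : ∀ u : ℕ, |((u : ℤ) * (g * a')).bmod (g * r)| = g * |((u : ℤ) * a').bmod r| := by
    intro u
    rw [abs_bmod _ _ hd, abs_bmod _ _ hr, show (u : ℤ) * (g * a') = g * (u * a') by ring,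
      Nat.cast_mul, Int.mul_emod_mul_of_pos _ _ (by exact_mod_cast hg), ← mul_sub,
      mul_min_of_nonneg _ _ (by positivity)]
  simp_rw [hterm]
  rw [← Finset.mul_sum, sum_range_mul_periodic]
  · have := sum_abs_bmod_le_of_coprime a' r hr hcop
    push_cast
    nlinarith [mul_le_mul_of_nonneg_left this (sq_nonneg (g : ℤ))]
  · intro u
    simp only [Nat.cast_add, add_mul]
    rw [abs_bmod _ _ hr, abs_bmod _ _ hr, Int.add_mul_emod_self_left]

/-! ### Cosets of the sublattice obtained by exchanging a basis vector -/

/-- The standard basis of `ℤ⁶` with its `k`-th vector replaced by `x`. -/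
def exch (x : Fin 6 → ℤ) (k : Fin 6) : Fin 6 → Fin 6 → ℤ :=
  Function.update (fun j => Pi.single j 1) k x

theorem exch_self (x : Fin 6 → ℤ) (k : Fin 6) : exch x k k = x := by simp [exch]

theorem exch_of_ne (x : Fin 6 → ℤ) {k j : Fin 6} (h : j ≠ k) :
    exch x k j = Pi.single j 1 := by simp [exch, h]

theorem exch_apply_of_ne (x : Fin 6 → ℤ) {k j : Fin 6} (h : j ≠ k) : exch x k j k = 0 := by
  rw [exch_of_ne x h, Pi.single_eq_of_ne (Ne.symm h)]

theorem exists_coset_vector (x : Fin 6 → ℤ) (k : Fin 6) (y : Fin 6 → ℤ)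
    (hy : ∀ j, j ≠ k → x k ∣ y k * x j + y j) :
    ∃ w : Fin 6 → ℤ, w k = y k ∧ x k • w = ∑ j, y j • exch x k j := by
  refine ⟨fun j => if j = k then y k else (y k * x j + y j) / x k, by simp, ?_⟩
  funext i
  have hsum : (∑ j, y j • exch x k j) i = y k * x i + if i = k then 0 else y i := by
    rw [Finset.sum_apply, ← Finset.add_sum_erase _ _ (Finset.mem_univ k), exch_self]
    congr 1
    have : ∀ j ∈ Finset.univ.erase k, (y j • exch x k j) i = if i = j then y j else 0 := by
      intro j hj
      rw [exch_of_ne x (Finset.ne_of_mem_erase hj), Pi.smul_apply, Pi.single_apply]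
      simp
    rw [Finset.sum_congr rfl this, Finset.sum_ite_eq]
    by_cases h : i = k <;> simp [h]
  rw [hsum, Pi.smul_apply, smul_eq_mul]
  by_cases h : i = k
  · subst h; simp; ring
  · simp only [h, if_false]
    exact Int.mul_ediv_cancel' (hy i h)

/-- The symmetric residues modulo `d` of `u` (in position `k`) and of `-u * x j` (elsewhere). They
are the coordinates, multiplied by `d`, of a representative of `u • b k` modulo the sublattice
spanned by `exch x k`, provided that `x k = d`. -/
def res (x : Fin 6 → ℤ) (k : Fin 6) (d : ℕ) (u : ℤ) (j : Fin 6) : ℤ :=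
  (u * Function.update (-x) k 1 j).bmod d

theorem res_self (x : Fin 6 → ℤ) (k : Fin 6) (d : ℕ) (u : ℤ) : res x k d u k = u.bmod d := by
  simp [res]

theorem res_of_ne (x : Fin 6 → ℤ) {k j : Fin 6} (h : j ≠ k) (d : ℕ) (u : ℤ) :
    res x k d u j = (-(u * x j)).bmod d := by
  simp [res, h]

theorem res_dvd (x : Fin 6 → ℤ) (k : Fin 6) (d : ℕ) (u : ℤ) (j : Fin 6) (h : j ≠ k) :
    (d : ℤ) ∣ res x k d u k * x j + res x k d u j := by
  rw [res_self, res_of_ne x h]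
  have h1 : (d : ℤ) ∣ u - u.bmod d := Int.dvd_self_sub_bmod
  have h2 : (d : ℤ) ∣ -(u * x j) - (-(u * x j)).bmod d := Int.dvd_self_sub_bmod
  have := (h1.mul_right (x j)).add h2
  rw [← dvd_neg]
  convert this using 1
  ring

section Lattice

variable {E : Type*} [NormedAddCommGroup E] [InnerProductSpace ℝ E]

theorem map_smul_real (T : (Fin 6 → ℤ) →+ E) (c : ℤ) (w : Fin 6 → ℤ) :
    T (c • w) = (c : ℝ) • T w := by
  rw [map_zsmul, Int.cast_smul_eq_zsmul]

/-- Watson's identity for the lattice vector `w` with coordinates `y j / x k` in the basis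
`exch x k`. -/
theorem exists_watson (T : (Fin 6 → ℤ) →+ E) (x : Fin 6 → ℤ) (k : Fin 6) (y : Fin 6 → ℤ)
    (hy : ∀ j, j ≠ k → x k ∣ y k * x j + y j) :
    ∃ w : Fin 6 → ℤ, w k = y k ∧
      ∑ j, |(y j : ℝ)| * (‖T (w - (y j).sign • exch x k j)‖ ^ 2 - ‖T (exch x k j)‖ ^ 2)
        = (∑ j, |(y j : ℝ)| - 2 * x k) * ‖T w‖ ^ 2 := by
  obtain ⟨w, hwk, hw⟩ := exists_coset_vector x k y hy
  refine ⟨w, hwk, ?_⟩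
  have h := congrArg T hw
  rw [map_sum, map_smul_real] at h
  simp_rw [map_smul_real] at h
  rw [← watson_identity _ y _ _ h]
  simp_rw [map_sub, map_smul_real]

/-- The consequence of Watson's identity when every exchanged basis vector is, up to the factor
`ρ j` in squared norm, at most as long as the lattice vectors in the cosets involved. -/
theorem watson_bound (T : (Fin 6 → ℤ) →+ E) (x : Fin 6 → ℤ) (hpos : 0 < ‖T x‖ ^ 2)
    (hmin : ∀ w, w ≠ 0 → ‖T x‖ ^ 2 ≤ ‖T w‖ ^ 2) (k : Fin 6) (y : Fin 6 → ℤ) (ρ : Fin 6 → ℝ)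
    (hy : ∀ j, j ≠ k → x k ∣ y k * x j + y j) (hyk : ¬ x k ∣ y k) (hρ1 : ∀ j, 1 ≤ ρ j)
    (hρ : ∀ j, j ≠ k → y j ≠ 0 → ∀ w, w k = y k →
      ‖T (Pi.single j 1)‖ ^ 2 ≤ ρ j * ‖T w‖ ^ 2) :
    2 * (x k : ℝ) ≤ ∑ j, |(y j : ℝ)| * ρ j := by
  obtain ⟨w, hwk, hw⟩ := exists_watson T x k y hy
  have hyk0 : y k ≠ 0 := fun h => hyk (h ▸ dvd_zero _)
  have hw0 : w ≠ 0 := fun h => hyk0 (by rw [← hwk, h]; rfl)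
  have hwpos : 0 < ‖T w‖ ^ 2 := hpos.trans_le (hmin w hw0)
  have hterm : ∀ j, |(y j : ℝ)| * ((1 - ρ j) * ‖T w‖ ^ 2)
      ≤ |(y j : ℝ)| * (‖T (w - (y j).sign • exch x k j)‖ ^ 2 - ‖T (exch x k j)‖ ^ 2) := by
    intro j
    by_cases hyj : y j = 0
    · simp [hyj]
    refine mul_le_mul_of_nonneg_left ?_ (abs_nonneg _)
    have key : ‖T (exch x k j)‖ ^ 2 ≤ ρ j * ‖T w‖ ^ 2 ∧
        ‖T (exch x k j)‖ ^ 2 ≤ ρ j * ‖T (w - (y j).sign • exch x k j)‖ ^ 2 := by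
      by_cases hjk : j = k
      · subst hjk
        rw [exch_self]
        have h1 : w - (y j).sign • x ≠ 0 := by
          intro h
          have h2 := congrFun h j
          simp only [Pi.sub_apply, Pi.smul_apply, smul_eq_mul, Pi.zero_apply, hwk] at h2
          exact hyk ⟨(y j).sign, by linarith⟩
        have h2 := hmin _ hw0
        have h3 := hmin _ h1
        constructor <;> nlinarith [hρ1 j]
      · have h0 := exch_apply_of_ne x hjk
        rw [exch_of_ne x hjk] at h0 ⊢
        exact ⟨hρ j hjk hyj _ hwk, hρ j hjk hyj _ (by simp [hwk, Pi.single_eq_of_ne (Ne.symm hjk)])⟩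
    obtain ⟨k1, k2⟩ := key
    have hρ0 := hρ1 j

    have h4 : ‖T (exch x k j)‖ ^ 2 / ρ j ≤ ‖T (w - (y j).sign • exch x k j)‖ ^ 2 := by
      rw [div_le_iff₀ (by linarith)]; linarith
    have h5 : ‖T (exch x k j)‖ ^ 2 / ρ j ≤ ‖T w‖ ^ 2 := by
      rw [div_le_iff₀ (by linarith)]; linarith
    have h6 : ‖T (exch x k j)‖ ^ 2 = ρ j * (‖T (exch x k j)‖ ^ 2 / ρ j) := by
      field_simp
    nlinarith
  have hsum := Finset.sum_le_sum fun j (_ : j ∈ Finset.univ) => hterm j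
  rw [hw] at hsum
  have : ∑ j, |(y j : ℝ)| * ((1 - ρ j) * ‖T w‖ ^ 2)
      = (∑ j, |(y j : ℝ)| - ∑ j, |(y j : ℝ)| * ρ j) * ‖T w‖ ^ 2 := by
    rw [← Finset.sum_sub_distrib, Finset.sum_mul]
    exact Finset.sum_congr rfl fun j _ => by ring
  rw [this] at hsum
  have := le_of_mul_le_mul_right hsum hwpos
  linarith

/-- Summing `watson_bound` over all nonzero residues `u` modulo `d = x k` gives
`2 d (d - 1) ≤ ∑ ρⱼ * ⌊d² / 4⌋`, which fails for `d ≥ 5`. -/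
theorem lt_five_of_bound (T : (Fin 6 → ℤ) →+ E) (x : Fin 6 → ℤ) (hpos : 0 < ‖T x‖ ^ 2)
    (hmin : ∀ w, w ≠ 0 → ‖T x‖ ^ 2 ≤ ‖T w‖ ^ 2) (k : Fin 6) (ρ : Fin 6 → ℝ)
    (hρ1 : ∀ j, 1 ≤ ρ j) (hρsum : ∑ j, ρ j ≤ 13 / 2)
    (hρ : ∀ j, j ≠ k → x j ≠ 0 → ∀ w : Fin 6 → ℤ, w k ≠ 0 →
      ‖T (Pi.single j 1)‖ ^ 2 ≤ ρ j * ‖T w‖ ^ 2) :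
    x k < 5 := by
  by_contra! hk
  obtain ⟨d, hd⟩ : ∃ d : ℕ, x k = d := ⟨(x k).toNat, by omega⟩
  have hd5 : 5 ≤ d := by omega
  have hu : ∀ u ∈ Finset.range d, u ≠ 0 →
      2 * (d : ℝ) ≤ ∑ j, ((|res x k d u j| : ℤ) : ℝ) * ρ j := by
    intro u hu hu0
    have hud := Finset.mem_range.1 hu
    have hndvd : ¬ x k ∣ res x k d u k := by
      rw [hd, res_self]
      intro h
      have h1 : (d : ℤ) ∣ (u : ℤ) - (u : ℤ).bmod d := Int.dvd_self_sub_bmod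
      have h2 : (d : ℤ) ∣ (u : ℤ) := by simpa using h1.add h
      have := Nat.le_of_dvd (by omega) (Int.natCast_dvd_natCast.1 h2)
      omega
    have := watson_bound T x hpos hmin k (res x k d u) ρ
      (fun j hj => by rw [hd]; exact res_dvd x k d u j hj) hndvd hρ1 ?_
    · rw [hd] at this
      push_cast at this ⊢
      exact this
    · intro j hj hyj w hw
      refine hρ j hj ?_ w ?_
      · intro h
        rw [res_of_ne x hj, h] at hyj
        simp at hyj
      · intro h
        exact hndvd (by rw [← hw, h]; exact dvd_zero _)
  have htotal : ∑ u ∈ Finset.range d, (if u = 0 then (0 : ℝ) else 2 * d)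
      ≤ ∑ u ∈ Finset.range d, ∑ j, ((|res x k d u j| : ℤ) : ℝ) * ρ j := by
    refine Finset.sum_le_sum fun u hu' => ?_
    split_ifs with h
    · exact Finset.sum_nonneg fun j _ => mul_nonneg (by exact_mod_cast abs_nonneg _)
        (by linarith [hρ1 j])
    · exact hu u hu' h
  have hleft : ∑ u ∈ Finset.range d, (if u = 0 then (0 : ℝ) else 2 * d) = 2 * d * (d - 1) := by
    obtain ⟨e, rfl⟩ : ∃ e, d = e + 1 := ⟨d - 1, by omega⟩
    rw [Finset.sum_range_succ']
    simp
    ring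
  have hS : ∀ j, 4 * ∑ u ∈ Finset.range d, |res x k d u j| ≤ (d : ℤ) ^ 2 := fun j =>
    sum_abs_bmod_le _ d (by omega)
  -- For `d = 5` the integrality of the sum is needed: the bound `25 / 4` improves to `6`.
  have hS' : ∃ s : ℝ, (∀ j, ((∑ u ∈ Finset.range d, |res x k d u j| : ℤ) : ℝ) ≤ s) ∧
      13 / 2 * s < 2 * d * (d - 1) ∧ 0 ≤ s := by
    rcases hd5.eq_or_lt with h | h
    · refine ⟨6, fun j => ?_, ?_, by norm_num⟩
      · have h2 : ∑ u ∈ Finset.range d, |res x k d u j| ≤ 6 := by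
          have := hS j
          rw [← h] at this ⊢
          norm_num at this
          omega
        exact_mod_cast h2
      · rw [← h]; norm_num
    · have h6 : (6 : ℝ) ≤ d := by exact_mod_cast h
      refine ⟨(d : ℝ) ^ 2 / 4, fun j => ?_, by nlinarith, by positivity⟩
      have : (4 : ℝ) * ((∑ u ∈ Finset.range d, |res x k d u j| : ℤ) : ℝ) ≤ (d : ℝ) ^ 2 := by
        exact_mod_cast hS j
      linarith
  obtain ⟨s, hs, hlt, hs0⟩ := hS'
  rw [hleft, Finset.sum_comm] at htotal
  have hright : ∑ j, ∑ u ∈ Finset.range d, ((|res x k d u j| : ℤ) : ℝ) * ρ j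
      ≤ ∑ j, s * ρ j := by
    refine Finset.sum_le_sum fun j _ => ?_
    rw [← Finset.sum_mul]
    refine mul_le_mul_of_nonneg_right ?_ (by linarith [hρ1 j])
    exact_mod_cast hs j
  rw [← Finset.mul_sum] at hright
  nlinarith

/-! ### Lattices spanned by minimum vectors -/

theorem abs_res_four (x : Fin 6 → ℤ) (k j : Fin 6) :
    0 ≤ |res x k 4 1 j| ∧ |res x k 4 1 j| ≤ 2 ∧
      |res x k 4 2 j| = 2 * (|res x k 4 1 j| % 2) := by
  unfold res
  rw [abs_bmod _ _ (by norm_num), abs_bmod _ _ (by norm_num)]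
  push_cast
  omega

/-- Here `α j` is the absolute value of the `j`-th residue modulo `4`. The two hypotheses on sums
come from Watson's identity for the multiples `u = 1` and `u = 2`; they add up to the largest value
that `∑ (α j + α j % 2)` can have. -/
theorem four_pattern (α : Fin 6 → ℤ) (h2 : ∀ j, α j ≤ 2)
    (h8 : 8 ≤ ∑ j, α j) (ho : 7 ≤ ∑ j, 2 * (α j % 2)) :
    (∀ j, α j = 1 ∨ α j = 2) ∧ ∑ j, α j = 8 ∧ ∑ j, α j % 2 = 4 := by
  rw [← Finset.mul_sum] at ho
  have hnn : ∀ j ∈ Finset.univ, 0 ≤ 2 - α j - α j % 2 := fun j _ => by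
    have := h2 j
    omega
  have hsum : ∑ j, (2 - α j - α j % 2) = 12 - ∑ j, α j - ∑ j, α j % 2 := by
    rw [Finset.sum_sub_distrib, Finset.sum_sub_distrib]
    simp
  have hle := Finset.sum_nonneg hnn
  have hz := (Finset.sum_eq_zero_iff_of_nonneg hnn).1 (by omega)
  refine ⟨fun j => ?_, by omega, by omega⟩
  have := hz j (Finset.mem_univ j)
  omega

/-- If all basis vectors involved in `x` are minimum vectors, the coordinates are at most `3`. For
`x k = 4`, let `z` be a quarter of the signed sum of the four exchanged basis vectors with residue
`±1`. Rounding away the two with residue `±2` gives `‖z‖² ≥ N / 2`, whereas the three lattice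
vectors `2 z - m - y j • f j` yield `‖z‖² ≤ N / 4`. -/
theorem minimal_case (T : (Fin 6 → ℤ) →+ E) (x : Fin 6 → ℤ) (hpos : 0 < ‖T x‖ ^ 2)
    (hmin : ∀ w, w ≠ 0 → ‖T x‖ ^ 2 ≤ ‖T w‖ ^ 2) (k : Fin 6)
    (hall : ∀ j, x j ≠ 0 → ‖T (Pi.single j 1)‖ ^ 2 ≤ ‖T x‖ ^ 2) :
    x k ≤ 3 := by
  have hbd : ∀ j, x j ≠ 0 → ∀ w : Fin 6 → ℤ, w k ≠ 0 →
      ‖T (Pi.single j 1)‖ ^ 2 ≤ (1 : ℝ) * ‖T w‖ ^ 2 := by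
    intro j hj w hw
    rw [one_mul]
    exact (hall j hj).trans (hmin w fun h => hw (by rw [h]; rfl))
  by_contra! hk
  have hk5 := lt_five_of_bound T x hpos hmin k (fun _ => 1) (fun _ => le_rfl)
    (by norm_num) (fun j _ hj => hbd j hj)
  have hk4 : x k = 4 := by omega
  have hW : ∀ u : ℤ, ¬ (4 : ℤ) ∣ u.bmod 4 → (8 : ℤ) ≤ ∑ j, |res x k 4 u j| := by
    intro u hu
    have := watson_bound T x hpos hmin k (res x k 4 u) (fun _ => 1)
      (fun j hj => by rw [hk4]; exact res_dvd x k 4 u j hj) (by rw [hk4, res_self]; exact hu)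
      (fun _ => le_rfl) ?_
    · rw [hk4] at this
      simp only [mul_one] at this
      have h' : ((2 * 4 : ℤ) : ℝ) ≤ ((∑ j, |res x k 4 u j| : ℤ) : ℝ) := by
        push_cast; push_cast at this; linarith
      exact_mod_cast h'
    · intro j hj hyj w hw
      refine hbd j ?_ w ?_
      · intro h
        rw [res_of_ne x hj, h] at hyj
        simp at hyj
      · intro h
        rw [h, res_self] at hw
        exact hu (by rw [← hw]; exact dvd_zero _)
  have h1 := hW 1 (by decide)
  have h2 := hW 2 (by decide)
  simp_rw [fun j => (abs_res_four x k j).2.2] at h2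
  obtain ⟨hα, -, hodd⟩ := four_pattern (fun j => |res x k 4 1 j|)
    (fun j => (abs_res_four x k j).2.1) h1 (by linarith)
  set y := res x k 4 1 with hy
  have hyk : y k = 1 := by rw [hy, res_self]; decide
  have hyne : ∀ j, y j ≠ 0 := by
    intro j h
    have := hα j
    simp [h] at this
  -- The exchanged basis consists of minimum vectors.
  have hF : ∀ j, ‖T (exch x k j)‖ ^ 2 ≤ ‖T x‖ ^ 2 := by
    intro j
    by_cases hj : j = k
    · rw [hj, exch_self]
    · rw [exch_of_ne x hj]
      refine hall j fun h => hyne j ?_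
      rw [hy, res_of_ne x hj, h]
      simp
  obtain ⟨w, hwk, hw⟩ := exists_coset_vector x k y
    (fun j hj => by rw [hk4]; exact res_dvd x k 4 1 j hj)
  rw [hk4] at hw
  let O : Finset (Fin 6) := Finset.univ.filter fun j => |y j| = 1
  let V : Finset (Fin 6) := Finset.univ.filter fun j => ¬ |y j| = 1
  have hO : O.card = 4 := by
    have : ∑ j, |y j| % 2 = (O.card : ℤ) := by
      rw [Finset.card_filter]
      push_cast
      refine Finset.sum_congr rfl fun j _ => ?_
      rcases hα j with h | h <;> simp [h]
    have h4 : (O.card : ℤ) = 4 := by rw [← this]; exact hodd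
    exact_mod_cast h4
  have hV : V.card = 2 := by
    have : O.card + V.card = 6 := by
      simpa using Finset.card_filter_add_card_filter_not (s := (Finset.univ : Finset (Fin 6)))
        (fun j => |y j| = 1)
    omega
  have hkO : k ∈ O := by simp [O, hyk]
  have hVk : ∀ j ∈ V, j ≠ k := by
    rintro j hj rfl
    simp [V, hyk] at hj
  have hV2 : ∀ j ∈ V, y j = 2 ∨ y j = -2 := by
    intro j hj
    have h := (hα j).resolve_left (Finset.mem_filter.1 hj).2
    exact (abs_eq (by norm_num)).1 h
  set z : E := (1 / 4 : ℝ) • ∑ j ∈ O, (y j : ℝ) • T (exch x k j) with hz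
  have hTw : (4 : ℝ) • T w = (4 : ℝ) • z + ∑ j ∈ V, (y j : ℝ) • T (exch x k j) := by
    have h := congrArg T hw
    rw [map_sum, map_smul_real] at h
    simp_rw [map_smul_real] at h
    rw [hz, smul_smul]
    norm_num
    norm_num at h
    rw [h]
    exact (Finset.sum_filter_add_sum_filter_not _ _ _).symm
  have hzlow : ‖T x‖ ^ 2 ≤ 2 * ‖z‖ ^ 2 := by
    obtain ⟨c, hc⟩ := exists_rounding (fun j => T (exch x k j)) (fun j => (y j : ℝ) / 4) V z
    have hvec : z + ∑ j ∈ V, ((y j : ℝ) / 4 - c j) • T (exch x k j)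
        = T (w - ∑ j ∈ V, c j • exch x k j) := by
      rw [map_sub, map_sum]
      simp_rw [map_smul_real, sub_smul]
      rw [Finset.sum_sub_distrib]
      have : T w = z + ∑ j ∈ V, ((y j : ℝ) / 4) • T (exch x k j) := by
        have h := congrArg (fun v => (1 / 4 : ℝ) • v) hTw
        simp only [smul_add, smul_smul, Finset.smul_sum] at h
        norm_num at h
        rw [h]
        congr 1
        exact Finset.sum_congr rfl fun j _ => by congr 1; ring
      rw [this]
      abel
    have hne : w - ∑ j ∈ V, c j • exch x k j ≠ 0 := by
      intro h
      have h' := congrFun h k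
      rw [Pi.sub_apply, Finset.sum_apply, Finset.sum_eq_zero, hwk, hyk] at h'
      · simp at h'
      · intro j hj
        rw [Pi.smul_apply, exch_apply_of_ne x (hVk j hj), smul_zero]
    rw [hvec] at hc
    have hsum : ∑ j ∈ V, Int.fract ((y j : ℝ) / 4) * (1 - Int.fract ((y j : ℝ) / 4))
        * ‖T (exch x k j)‖ ^ 2 ≤ ∑ j ∈ V, (1 / 4 : ℝ) * ‖T x‖ ^ 2 :=
      Finset.sum_le_sum fun j _ => mul_le_mul (fract_mul_le _) (hF j) (by positivity) (by norm_num)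
    rw [Finset.sum_const, hV] at hsum
    have := hmin _ hne
    norm_num at hsum
    linarith
  have hzup : 4 * ‖z‖ ^ 2 ≤ ‖T x‖ ^ 2 := by
    set g : E := (2 : ℝ) • z - T x with hg
    have hlow : ∀ j ∈ O.erase k, ‖T x‖ ^ 2 ≤ ‖g - (y j : ℝ) • T (exch x k j)‖ ^ 2 := by
      intro j hj
      have hjk := Finset.ne_of_mem_erase hj
      let v : Fin 6 → ℤ :=
        (2 : ℤ) • w - ∑ i ∈ V, (y i / 2) • exch x k i - x - y j • exch x k j
      have hv : T v = g - (y j : ℝ) • T (exch x k j) := by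
        have h2w : T ((2 : ℤ) • w) - ∑ i ∈ V, T ((y i / 2) • exch x k i) = (2 : ℝ) • z := by
          have h := congrArg (fun v => (1 / 2 : ℝ) • v) hTw
          simp only [smul_add, smul_smul, Finset.smul_sum] at h
          norm_num at h
          rw [map_smul_real]
          push_cast
          rw [h, sub_eq_iff_eq_add]
          congr 1
          refine Finset.sum_congr rfl fun i hi => ?_
          rw [map_smul_real]
          congr 1
          rcases hV2 i hi with h | h <;> rw [h] <;> norm_num
        simp only [v]
        rw [map_sub, map_sub, map_sub, map_sum, h2w, map_smul_real]
      have hvne : v ≠ 0 := by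
        intro h
        have h' := congrFun h k
        simp only [v, Pi.sub_apply, Finset.sum_apply, Pi.smul_apply, smul_eq_mul,
          Pi.zero_apply] at h'
        rw [Finset.sum_eq_zero, hwk, hyk, hk4, exch_apply_of_ne x hjk] at h'
        · norm_num at h'
        · intro i hi
          rw [exch_apply_of_ne x (hVk i hi), mul_zero]
      rw [← hv]
      exact hmin v hvne
    have hterm : ∀ j ∈ O.erase k, ‖T x‖ ^ 2 ≤
        ‖g‖ ^ 2 - 2 * inner ℝ g ((y j : ℝ) • T (exch x k j)) + ‖T x‖ ^ 2 := by
      intro j hj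
      have h := hlow j hj
      rw [norm_sub_sq_real, norm_smul] at h
      have hyj : ‖(y j : ℝ)‖ = 1 := by
        have := (Finset.mem_filter.1 (Finset.mem_of_mem_erase hj)).2
        rw [Real.norm_eq_abs]
        exact_mod_cast this
      rw [hyj, one_mul] at h
      linarith [hF j]
    have hsum := Finset.sum_le_sum hterm
    have hcard : (O.erase k).card = 3 := by rw [Finset.card_erase_of_mem hkO, hO]
    rw [Finset.sum_add_distrib, Finset.sum_sub_distrib, ← Finset.mul_sum, ← inner_sum,
      Finset.sum_const, Finset.sum_const, hcard] at hsum
    have hrest : ∑ j ∈ O.erase k, (y j : ℝ) • T (exch x k j) = (2 : ℝ) • g + T x := by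
      have h := Finset.add_sum_erase O (fun j => (y j : ℝ) • T (exch x k j)) hkO
      simp only [exch_self, hyk] at h
      have h4 : (4 : ℝ) • z = ∑ j ∈ O, (y j : ℝ) • T (exch x k j) := by
        rw [hz, smul_smul]; norm_num
      rw [← h4] at h
      rw [hg, smul_sub, smul_smul]
      push_cast at h
      norm_num at h ⊢
      rw [← h]
      module
    rw [hrest, inner_add_right, inner_smul_right, real_inner_self_eq_norm_sq] at hsum
    have h2z : (4 : ℝ) * ‖z‖ ^ 2 = ‖g‖ ^ 2 + 2 * inner ℝ g (T x) + ‖T x‖ ^ 2 := by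
      have h : g + T x = (2 : ℝ) • z := by rw [hg, sub_add_cancel]
      rw [← norm_add_sq_real, h, norm_smul (2 : ℝ) z, mul_pow]
      norm_num
    norm_num at hsum
    linarith
  linarith

/-! ### Minkowski-reduced bases -/

/-- Minkowski reduction of the basis `T (Pi.single i 1)`: primitivity of the tail of `c` from `i`
on is expressed by requiring all its common divisors to be units. -/
def IsRed (T : (Fin 6 → ℤ) →+ E) : Prop :=
  ∀ (i : Fin 6) (c : Fin 6 → ℤ), (∀ g : ℤ, (∀ j, i ≤ j → g ∣ c j) → IsUnit g) →
    ‖T (Pi.single i 1)‖ ^ 2 ≤ ‖T c‖ ^ 2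

set_option linter.unusedSectionVars false in
theorem IsRed.le_of_isUnit {T : (Fin 6 → ℤ) →+ E} (hT : IsRed T) {i j : Fin 6} (hij : i ≤ j)
    {c : Fin 6 → ℤ} (hc : IsUnit (c j)) : ‖T (Pi.single i 1)‖ ^ 2 ≤ ‖T c‖ ^ 2 :=
  hT i c fun _ hg => isUnit_of_dvd_unit (hg j hij) hc

theorem IsRed.mono {T : (Fin 6 → ℤ) →+ E} (hT : IsRed T) {i j : Fin 6} (hij : i ≤ j) :
    ‖T (Pi.single i 1)‖ ^ 2 ≤ ‖T (Pi.single j 1)‖ ^ 2 :=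
  hT.le_of_isUnit hij (by simp)

theorem map_eq_sum (T : (Fin 6 → ℤ) →+ E) (w : Fin 6 → ℤ) :
    T w = ∑ j, (w j : ℝ) • T (Pi.single j 1) := by
  simp_rw [← map_smul_real, ← map_sum]
  congr 1
  funext i
  simp [Finset.sum_apply, Pi.single_apply]

/-- If `g` divides the coordinates of `w` outside `s`, then rounding the remaining coordinates of
`w / g` gives a lattice vector whose squared norm exceeds that of `w / g` by at most a quarter of
the squared norms of the basis vectors in `s`. -/
theorem exists_rounded_quotient (T : (Fin 6 → ℤ) →+ E) (w : Fin 6 → ℤ) (g : ℤ) (hg : g ≠ 0)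
    (s : Finset (Fin 6)) (hs : ∀ j, j ∉ s → g ∣ w j) :
    ∃ c : Fin 6 → ℤ, (∀ j, j ∉ s → w j = g * c j) ∧
      ‖T c‖ ^ 2 ≤ ‖T w‖ ^ 2 / g ^ 2 + ∑ j ∈ s, 1 / 4 * ‖T (Pi.single j 1)‖ ^ 2 := by
  obtain ⟨c, hc⟩ := exists_rounding (fun j => T (Pi.single j 1)) (fun j => -((w j : ℝ) / g)) s
    ((1 / g : ℝ) • T w)
  have hgR : (g : ℝ) ≠ 0 := by exact_mod_cast hg
  refine ⟨fun j => if j ∈ s then -c j else w j / g, ?_, ?_⟩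
  · intro j hj
    simp only [hj, if_false]
    exact (Int.mul_ediv_cancel' (hs j hj)).symm
  · have hvec : T (fun j => if j ∈ s then -c j else w j / g)
        = (1 / g : ℝ) • T w + ∑ j ∈ s, (-((w j : ℝ) / g) - c j) • T (Pi.single j 1) := by
      rw [map_eq_sum T w, map_eq_sum T, Finset.smul_sum,
        ← Finset.sum_filter_add_sum_filter_not Finset.univ (· ∈ s),
        ← Finset.sum_filter_add_sum_filter_not Finset.univ (· ∈ s)
          (fun j => (1 / g : ℝ) • (w j : ℝ) • T (Pi.single j 1))]
      rw [Finset.filter_univ_mem, add_right_comm, ← Finset.sum_add_distrib]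
      congr 1
      · refine Finset.sum_congr rfl fun j hj => ?_
        rw [if_pos hj, smul_smul, ← add_smul]
        congr 1
        push_cast
        field_simp
        ring
      · refine Finset.sum_congr rfl fun j hj => ?_
        have hj' := (Finset.mem_filter.1 hj).2
        rw [if_neg hj', smul_smul]
        congr 1
        rw [Int.cast_div (hs j hj') hgR]
        ring
    rw [hvec]
    refine hc.trans (add_le_add (le_of_eq ?_) (Finset.sum_le_sum fun j _ =>
      mul_le_mul_of_nonneg_right (fract_mul_le _) (by positivity)))
    rw [norm_smul, mul_pow, Real.norm_eq_abs, sq_abs]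
    ring

/-- If the tail of `w` is `g ≥ 2` times a primitive one, the rounded quotient `w / g` still has a
primitive tail, so that reduction bounds the `i`-th basis vector by it. -/
theorem IsRed.le_or_le {T : (Fin 6 → ℤ) →+ E} (hT : IsRed T) (i : Fin 6) (w : Fin 6 → ℤ)
    (hw : ∃ j, i ≤ j ∧ w j ≠ 0) :
    ‖T (Pi.single i 1)‖ ^ 2 ≤ ‖T w‖ ^ 2 ∨
      4 * ‖T (Pi.single i 1)‖ ^ 2 ≤
        ‖T w‖ ^ 2 + ∑ j ∈ Finset.Iio i, ‖T (Pi.single j 1)‖ ^ 2 := by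
  obtain ⟨j₀, hj₀, hwj₀⟩ := hw
  have hne : (Finset.Ici i).Nonempty := ⟨j₀, Finset.mem_Ici.2 hj₀⟩
  obtain ⟨p, hp, hp1⟩ := Finset.extract_gcd w hne
  set g := (Finset.Ici i).gcd w with hgdef
  have hg0 : g ≠ 0 := by
    intro h
    apply hwj₀
    rw [hp j₀ (Finset.mem_Ici.2 hj₀), h, zero_mul]
  have hdvd : ∀ j, i ≤ j → g ∣ w j := fun j hj => ⟨p j, hp j (Finset.mem_Ici.2 hj)⟩
  have hprim : ∀ c : Fin 6 → ℤ, (∀ j, i ≤ j → c j = p j) →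
      ‖T (Pi.single i 1)‖ ^ 2 ≤ ‖T c‖ ^ 2 := by
    intro c hc
    refine hT i c fun a ha => isUnit_of_dvd_one ?_
    rw [← hp1]
    exact Finset.dvd_gcd fun j hj => by
      rw [← hc j (Finset.mem_Ici.1 hj)]; exact ha j (Finset.mem_Ici.1 hj)
  by_cases hg : IsUnit g
  · left
    refine hT i w fun a ha => isUnit_of_dvd_unit (Finset.dvd_gcd fun j hj => ?_) hg
    exact ha j (Finset.mem_Ici.1 hj)
  · right
    have hg2 : (4 : ℝ) ≤ (g : ℝ) ^ 2 := by
      have : 4 ≤ g ^ 2 := by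
        rw [Int.isUnit_iff] at hg
        have : 2 ≤ |g| := by
          by_contra! h
          have := abs_lt.1 h
          omega
        nlinarith [sq_abs g]
      exact_mod_cast this
    obtain ⟨c, hc, hle⟩ := exists_rounded_quotient T w g hg0 (Finset.Iio i) (fun j hj =>
      hdvd j (by simpa using hj))
    have h1 := hprim c fun j hj => by
      have h2 := hc j (by simpa using hj)
      rw [hp j (Finset.mem_Ici.2 hj)] at h2
      exact (mul_left_cancel₀ hg0 h2).symm
    have h3 : ‖T w‖ ^ 2 / (g : ℝ) ^ 2 ≤ ‖T w‖ ^ 2 / 4 :=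
      div_le_div_of_nonneg_left (by positivity) (by norm_num) hg2
    rw [← Finset.mul_sum] at hle
    linarith

/-- The first four vectors of a Minkowski-reduced basis attain the successive minima. -/
theorem IsRed.le_of_val_le {T : (Fin 6 → ℤ) →+ E} (hT : IsRed T) :
    ∀ (i : Fin 6), i.val ≤ 3 → ∀ (w : Fin 6 → ℤ), (∃ j, i ≤ j ∧ w j ≠ 0) →
      ‖T (Pi.single i 1)‖ ^ 2 ≤ ‖T w‖ ^ 2 := by
  intro i
  induction i using WellFoundedLT.induction with
  | ind i ih =>
    intro hi w hw
    obtain ⟨j₀, hj₀, hwj₀⟩ := hw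
    rcases hT.le_or_le i w ⟨j₀, hj₀, hwj₀⟩ with h | h
    · exact h
    · have hsum : ∑ j ∈ Finset.Iio i, ‖T (Pi.single j 1)‖ ^ 2
          ≤ (Finset.Iio i).card • ‖T w‖ ^ 2 := Finset.sum_le_card_nsmul _ _ _ fun j hj => by
        have hj' := Finset.mem_Iio.1 hj
        exact ih j hj' (by omega) w ⟨j₀, hj'.le.trans hj₀, hwj₀⟩
      rw [Fin.card_Iio, nsmul_eq_mul] at hsum
      have h3 : (i.val : ℝ) ≤ 3 := by exact_mod_cast hi
      nlinarith [sq_nonneg ‖T w‖]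

theorem IsRed.le_five_fourths {T : (Fin 6 → ℤ) →+ E} (hT : IsRed T) (w : Fin 6 → ℤ)
    (hw : ∃ j : Fin 6, 4 ≤ j ∧ w j ≠ 0) :
    ‖T (Pi.single 4 1)‖ ^ 2 ≤ 5 / 4 * ‖T w‖ ^ 2 := by
  obtain ⟨j₀, hj₀, hwj₀⟩ := hw
  rcases hT.le_or_le 4 w ⟨j₀, hj₀, hwj₀⟩ with h | h
  · nlinarith [sq_nonneg ‖T w‖]
  · have hsum : ∑ j ∈ Finset.Iio (4 : Fin 6), ‖T (Pi.single j 1)‖ ^ 2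
        ≤ (Finset.Iio (4 : Fin 6)).card • ‖T w‖ ^ 2 :=
      Finset.sum_le_card_nsmul _ _ _ fun j hj => by
        have hj' := Finset.mem_Iio.1 hj
        exact hT.le_of_val_le j (by omega) w ⟨j₀, hj'.le.trans hj₀, hwj₀⟩
    rw [Fin.card_Iio, nsmul_eq_mul] at hsum
    norm_num at hsum
    linarith

/-! ### The last nonzero coordinate -/

/-- Watson's identity for the last nonzero coordinate and `u = 1`. All lattice vectors that occur,
except the one compared with `x` itself, have last coordinate `1`, hence are at least as long as
`T (Pi.single l 1)`; in the equality case they are as long as the basis vectors they are compared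
with. -/
theorem IsRed.last_watson {T : (Fin 6 → ℤ) →+ E} (hT : IsRed T) (x : Fin 6 → ℤ)
    (hpos : 0 < ‖T x‖ ^ 2) (hmin : ∀ w, w ≠ 0 → ‖T x‖ ^ 2 ≤ ‖T w‖ ^ 2) (l : Fin 6)
    (hl : ∀ j, l < j → x j = 0) (d : ℕ) (hd : x l = d) (hd3 : 3 ≤ d) :
    2 * (d : ℤ) ≤ ∑ j, |res x l d 1 j| ∧
      (∑ j, |res x l d 1 j| ≤ 2 * (d : ℤ) → ∀ j, j ≠ l → res x l d 1 j ≠ 0 →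
        ‖T (Pi.single l 1)‖ ^ 2 ≤ ‖T (Pi.single j 1)‖ ^ 2) := by
  have hyl : res x l d 1 l = 1 := by
    rw [res_self, Int.bmod_eq_of_le_mul_two] <;> omega
  have hndvd : ¬ x l ∣ res x l d 1 l := by
    rw [hyl, hd]
    intro h
    have := Int.le_of_dvd one_pos h
    omega
  have hdvd : ∀ j, j ≠ l → x l ∣ res x l d 1 l * x j + res x l d 1 j := fun j hj => by
    rw [hd]; exact res_dvd x l d 1 j hj
  have hlt : ∀ j, j ≠ l → res x l d 1 j ≠ 0 → j < l := by
    intro j hj hyj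
    refine lt_of_le_of_ne (not_lt.1 fun h => hyj ?_) hj
    rw [res_of_ne x hj, hl j h]
    simp
  have hlow : ∀ w : Fin 6 → ℤ, w l = 1 → ‖T (Pi.single l 1)‖ ^ 2 ≤ ‖T w‖ ^ 2 := fun w hw =>
    hT.le_of_isUnit le_rfl (by rw [hw]; exact isUnit_one)
  constructor
  · have := watson_bound T x hpos hmin l (res x l d 1) (fun _ => 1) hdvd hndvd
      (fun _ => le_rfl) (fun j hj hyj w hw => by
        rw [one_mul]
        exact (hT.mono (hlt j hj hyj).le).trans (hlow w (hw.trans hyl)))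
    simp only [mul_one] at this
    rw [hd] at this
    exact_mod_cast this
  · intro hle j hj hyj
    obtain ⟨w, hwl, hw⟩ := exists_watson T x l (res x l d 1) hdvd
    have hnn : ∀ i ∈ Finset.univ, 0 ≤ |(res x l d 1 i : ℝ)| *
        (‖T (w - (res x l d 1 i).sign • exch x l i)‖ ^ 2 - ‖T (exch x l i)‖ ^ 2) := by
      intro i _
      by_cases hyi : res x l d 1 i = 0
      · simp [hyi]
      refine mul_nonneg (abs_nonneg _) (sub_nonneg.2 ?_)
      by_cases hil : i = l
      · subst hil
        rw [exch_self]
        refine hmin _ fun h => hndvd ?_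
        have h2 := congrFun h i
        simp only [Pi.sub_apply, Pi.smul_apply, smul_eq_mul, Pi.zero_apply, hwl] at h2
        exact ⟨(res x i d 1 i).sign, by linarith⟩
      · have h0 := exch_apply_of_ne x hil
        rw [exch_of_ne x hil] at h0 ⊢
        exact (hT.mono (hlt i hil hyi).le).trans (hlow _ (by
          rw [Pi.sub_apply, Pi.smul_apply, h0, hwl, hyl]; simp))
    have hle' : (∑ i, |(res x l d 1 i : ℝ)| - 2 * x l) * ‖T w‖ ^ 2 ≤ 0 := by
      refine mul_nonpos_of_nonpos_of_nonneg ?_ (sq_nonneg _)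
      rw [hd, sub_nonpos]
      exact_mod_cast hle
    rw [← hw] at hle'
    have hz := (Finset.sum_eq_zero_iff_of_nonneg hnn).1 (le_antisymm hle' (Finset.sum_nonneg hnn))
      j (Finset.mem_univ j)
    have hne : |(res x l d 1 j : ℝ)| ≠ 0 := by
      rw [abs_ne_zero]; exact_mod_cast hyj
    have hz' := (mul_eq_zero.1 hz).resolve_left hne
    have h0 := exch_apply_of_ne x hj
    rw [exch_of_ne x hj] at hz' h0
    have := hlow (w - (res x l d 1 j).sign • Pi.single j 1) (by
      rw [Pi.sub_apply, Pi.smul_apply, h0, hwl, hyl]; simp)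
    linarith

/-- A last nonzero coordinate of at least `3` forces the corresponding basis vector to be a minimum
vector. Values from `5` on are excluded by `lt_five_of_bound`; for `3` and `4` the equality case of
Watson's identity holds and compares the last basis vector with the first. -/
theorem IsRed.last_le {T : (Fin 6 → ℤ) →+ E} (hT : IsRed T) (x : Fin 6 → ℤ)
    (hpos : 0 < ‖T x‖ ^ 2) (hmin : ∀ w, w ≠ 0 → ‖T x‖ ^ 2 ≤ ‖T w‖ ^ 2) (l : Fin 6)
    (hl : ∀ j, l < j → x j = 0) (hl3 : 3 ≤ x l) :
    ‖T (Pi.single l 1)‖ ^ 2 ≤ ‖T x‖ ^ 2 := by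
  let ρ : Fin 6 → ℝ := fun j => if j = 4 then 5 / 4 else 1
  have hρ1 : ∀ j, 1 ≤ ρ j := fun j => by
    simp only [ρ]; split_ifs <;> norm_num
  have hρ : ∀ j, j ≠ l → x j ≠ 0 → ∀ w : Fin 6 → ℤ, w l ≠ 0 →
      ‖T (Pi.single j 1)‖ ^ 2 ≤ ρ j * ‖T w‖ ^ 2 := by
    intro j hj hxj w hw
    have hjl : j < l := lt_of_le_of_ne (not_lt.1 fun h => hxj (hl j h)) hj
    by_cases h4 : j = 4
    · subst h4
      simpa [ρ] using hT.le_five_fourths w ⟨l, hjl.le, hw⟩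
    · have : j.val ≤ 3 := by omega
      simpa [ρ, h4] using hT.le_of_val_le j this w ⟨l, hjl.le, hw⟩
  have hl5 := lt_five_of_bound T x hpos hmin l ρ hρ1
    (by simp [ρ, Fin.sum_univ_six]; norm_num) hρ
  suffices h : ∃ d : ℕ, x l = d ∧ 3 ≤ d ∧ ∑ j, |res x l d 1 j| ≤ 2 * (d : ℤ) ∧
      ∀ j, res x l d 1 j ≠ 0 by
    obtain ⟨d, hd, hd3, hle, hne⟩ := h
    have h0 : ‖T (Pi.single 0 1)‖ ^ 2 ≤ ‖T x‖ ^ 2 :=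
      hT.le_of_val_le 0 (by simp) x ⟨l, Fin.zero_le l, by omega⟩
    by_cases hl0 : 0 = l
    · rw [← hl0]; exact h0
    · exact ((hT.last_watson x hpos hmin l hl d hd hd3).2 hle 0 hl0 (hne 0)).trans h0
  rcases (show x l = 3 ∨ x l = 4 by omega) with h3 | h4
  · refine ⟨3, by simpa using h3, le_rfl, ?_⟩
    have hb : ∀ j, |res x l 3 1 j| ≤ 1 := by
      intro j
      unfold res
      rw [abs_bmod _ _ (by norm_num)]
      push_cast
      omega
    have h6 := (hT.last_watson x hpos hmin l hl 3 (by simpa using h3) le_rfl).1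
    have hnn : ∀ j ∈ Finset.univ, 0 ≤ 1 - |res x l 3 1 j| := fun j _ => by linarith [hb j]
    have hsum : ∑ j, (1 - |res x l 3 1 j|) = 6 - ∑ j, |res x l 3 1 j| := by
      rw [Finset.sum_sub_distrib]; simp
    have hge := Finset.sum_nonneg hnn
    push_cast at h6 ⊢
    refine ⟨by linarith, fun j hj => ?_⟩
    have := (Finset.sum_eq_zero_iff_of_nonneg hnn).1 (by linarith) j (Finset.mem_univ j)
    rw [hj] at this
    simp at this
  · refine ⟨4, by simpa using h4, by norm_num, ?_⟩
    have h8 := (hT.last_watson x hpos hmin l hl 4 (by simpa using h4) (by norm_num)).1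
    have hndvd : ¬ x l ∣ res x l 4 2 l := by rw [h4, res_self]; decide
    have h2 := watson_bound T x hpos hmin l (res x l 4 2) ρ
      (fun j hj => by rw [h4]; exact res_dvd x l 4 2 j hj) hndvd hρ1 (by
        intro j hj hyj w hw
        refine hρ j hj ?_ w ?_
        · intro h
          rw [res_of_ne x hj, h] at hyj
          simp at hyj
        · intro h
          exact hndvd (by rw [← hw, h]; exact dvd_zero _))
    have hsplit : ∑ j, |(res x l 4 2 j : ℝ)| * ρ j
        = ((∑ j, |res x l 4 2 j| : ℤ) : ℝ) + ((|res x l 4 2 4| : ℤ) : ℝ) / 4 := by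
      simp [Fin.sum_univ_six, ρ]
      ring
    have hb4 : ((|res x l 4 2 4| : ℤ) : ℝ) ≤ 2 := by
      have h : |res x l 4 2 4| ≤ 2 := by
        have := abs_res_four x l 4
        omega
      exact_mod_cast h
    have h7 : (7 : ℤ) ≤ ∑ j, |res x l 4 2 j| := by
      rw [hsplit, h4] at h2
      have : (7 : ℝ) ≤ ((∑ j, |res x l 4 2 j| : ℤ) : ℝ) := by
        push_cast at h2 ⊢ hb4
        linarith
      exact_mod_cast this
    simp_rw [fun j => (abs_res_four x l j).2.2] at h7
    obtain ⟨hα, h8', -⟩ := four_pattern (fun j => |res x l 4 1 j|)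
      (fun j => (abs_res_four x l j).2.1) (by simpa using h8) h7
    refine ⟨by simpa using h8'.le, fun j hj => ?_⟩
    have := hα j
    simp [hj] at this

theorem IsRed.coord_le_three {T : (Fin 6 → ℤ) →+ E} (hT : IsRed T) (x : Fin 6 → ℤ)
    (hpos : 0 < ‖T x‖ ^ 2) (hmin : ∀ w, w ≠ 0 → ‖T x‖ ^ 2 ≤ ‖T w‖ ^ 2) (k : Fin 6) :
    x k ≤ 3 := by
  by_contra! hk
  obtain ⟨l, hxl, hl⟩ : ∃ l, x l ≠ 0 ∧ ∀ j, l < j → x j = 0 := by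
    have hne : (Finset.univ.filter fun j => x j ≠ 0).Nonempty := ⟨k, by simp; omega⟩
    refine ⟨_, (Finset.mem_filter.1 (Finset.max'_mem _ hne)).2, fun j hj => ?_⟩
    by_contra h
    exact absurd (Finset.le_max' _ j (Finset.mem_filter.2 ⟨Finset.mem_univ j, h⟩)) (not_le.2 hj)
  have hle : ∀ j, x j ≠ 0 → j ≤ l := fun j hj => not_lt.1 fun h => hj (hl j h)
  have hB : ‖T x‖ ^ 2 < ‖T (Pi.single l 1)‖ ^ 2 := by
    by_contra! hB
    have := minimal_case T x hpos hmin k fun j hj => (hT.mono (hle j hj)).trans hB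
    omega
  have hx2 : x l = 2 ∨ x l = -2 := by
    have h1 : ¬ IsUnit (x l) := fun h => hB.not_ge (hT.le_of_isUnit le_rfl h)
    have h2 : x l < 3 := by
      by_contra! h
      exact hB.not_ge (hT.last_le x hpos hmin l hl h)
    have h3 : -3 < x l := by
      by_contra! h
      have := hT.last_le (-x) (by simpa using hpos) (by simpa using hmin) l
        (fun j hj => by simp [hl j hj]) (by simp; omega)
      rw [map_neg, norm_neg] at this
      exact hB.not_ge this
    rw [Int.isUnit_iff] at h1
    omega
  let J : Finset (Fin 6) := Finset.univ.filter fun j => Odd (x j)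
  have hlJ : l ∉ J := by
    simp only [J, Finset.mem_filter, Finset.mem_univ, true_and, Int.not_odd_iff_even]
    rcases hx2 with h | h <;> rw [h] <;> decide
  have hJ : ∀ j, Odd (x j) → ‖T (Pi.single j 1)‖ ^ 2 ≤ ‖T x‖ ^ 2 := by
    intro j hj
    have hj0 : x j ≠ 0 := by rintro h; simp [h] at hj
    refine hT j x fun g hg => isUnit_of_dvd_one ?_
    have h1 := hg j le_rfl
    have h2 : g ∣ 2 := by
      have := hg l (hle j hj0)
      rcases hx2 with h | h <;> rw [h] at this
      · exact this
      · exact (dvd_neg).1 this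
    obtain ⟨a, ha⟩ := hj
    rw [ha] at h1
    exact (dvd_add_right (h2.mul_right a)).1 h1
  have hBl : ‖T (Pi.single l 1)‖ ^ 2 ≤ (1 + J.card) / 4 * ‖T x‖ ^ 2 := by
    obtain ⟨c, hc, hcle⟩ := exists_rounded_quotient T x 2 two_ne_zero J (fun j hj => by
      simp only [J, Finset.mem_filter, Finset.mem_univ, true_and, Int.not_odd_iff_even] at hj
      exact hj.two_dvd)
    have h1 : ‖T (Pi.single l 1)‖ ^ 2 ≤ ‖T c‖ ^ 2 := by
      refine hT.le_of_isUnit (le_refl l) ?_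
      have := hc l hlJ
      rw [Int.isUnit_iff]
      omega
    have h2 : ∑ j ∈ J, 1 / 4 * ‖T (Pi.single j 1)‖ ^ 2 ≤ J.card • (1 / 4 * ‖T x‖ ^ 2) :=
      Finset.sum_le_card_nsmul _ _ _ fun j hj => by
        have := hJ j (Finset.mem_filter.1 hj).2
        linarith
    rw [nsmul_eq_mul] at h2
    push_cast at hcle
    linarith
  have hJ5 : J.card ≤ 5 := by
    have := Finset.card_le_card (Finset.subset_erase.2 ⟨Finset.subset_univ J, hlJ⟩)
    simpa using this
  have hJ4 : 4 ≤ J.card := by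
    by_contra! h
    have : (J.card : ℝ) ≤ 3 := by exact_mod_cast Nat.le_of_lt_succ h
    nlinarith
  have hJ4R : (4 : ℝ) ≤ J.card := by exact_mod_cast hJ4
  -- These sum to `13 / 2` both for `J.card = 4` and for `J.card = 5`.
  let ρ : Fin 6 → ℝ := fun j => if Odd (x j) then 1 else (1 + J.card) / 4
  have hρ1 : ∀ j, 1 ≤ ρ j := fun j => by
    simp only [ρ]; split_ifs <;> linarith
  have hρ : ∀ j, x j ≠ 0 → ∀ w : Fin 6 → ℤ, w k ≠ 0 →
      ‖T (Pi.single j 1)‖ ^ 2 ≤ ρ j * ‖T w‖ ^ 2 := by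
    intro j hj w hw
    have hw' := hmin w fun h => hw (by rw [h]; rfl)
    have : ‖T (Pi.single j 1)‖ ^ 2 ≤ ρ j * ‖T x‖ ^ 2 := by
      by_cases hodd : Odd (x j)
      · simpa [ρ, hodd] using hJ j hodd
      · simp only [ρ, hodd, if_false]
        exact (hT.mono (hle j hj)).trans hBl
    nlinarith [hρ1 j]
  have hcount : ∀ a b : ℝ, ∑ j, (if Odd (x j) then a else b) = J.card * a + (6 - J.card) * b := by
    intro a b
    have h6 := Finset.card_filter_add_card_filter_not (s := (Finset.univ : Finset (Fin 6)))
      (fun j => Odd (x j))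
    rw [Finset.card_univ, Fintype.card_fin] at h6
    have h6' : (J.card : ℝ) + ((Finset.univ.filter fun j => ¬ Odd (x j)).card : ℝ) = 6 := by
      exact_mod_cast h6
    rw [Finset.sum_ite, Finset.sum_const, Finset.sum_const, nsmul_eq_mul, nsmul_eq_mul, ← h6']
    ring
  have hk5 := lt_five_of_bound T x hpos hmin k ρ hρ1 (by
    simp only [ρ]
    rw [hcount]
    rcases (show J.card = 4 ∨ J.card = 5 by omega) with h | h <;> rw [h] <;> norm_num)
    (fun j _ hj => hρ j hj)
  have hk4 : x k = 4 := by omega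
  have hkJ : k ∉ J := by simp [J, hk4]; decide
  have hkl : k ≠ l := by rintro rfl; omega
  have hcard : J.card = 4 := by
    have : J ⊆ (Finset.univ.erase l).erase k := fun j hj =>
      Finset.mem_erase.2 ⟨fun h => hkJ (h ▸ hj),
        Finset.mem_erase.2 ⟨fun h => hlJ (h ▸ hj), Finset.mem_univ j⟩⟩
    have := Finset.card_le_card this
    rw [Finset.card_erase_of_mem (by simp [hkl]), Finset.card_erase_of_mem (by simp)] at this
    simp at this
    omega
  have hndvd : ¬ x k ∣ res x k 4 1 k := by rw [hk4, res_self]; decide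
  have h8 := watson_bound T x hpos hmin k (res x k 4 1) (Function.update ρ k 1)
    (fun j hj => by rw [hk4]; exact res_dvd x k 4 1 j hj) hndvd
    (fun j => by
      by_cases h : j = k
      · subst h; simp
      · simpa [h] using hρ1 j)
    (by
      intro j hj hyj w hw
      rw [Function.update_of_ne hj]
      refine hρ j ?_ w ?_
      · intro h
        rw [res_of_ne x hj, h] at hyj
        simp at hyj
      · intro h
        exact hndvd (by rw [← hw, h]; exact dvd_zero _))
  -- Four terms are at most `1`, those at `k` and `l` at most `1` and `5 / 2`: in total less than `8`.
  have hterm : ∀ j, |(res x k 4 1 j : ℝ)| * Function.update ρ k 1 j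
      ≤ (if Odd (x j) then 1 else 5 / 2) - (if j = k then 3 / 2 else 0) := by
    intro j
    by_cases hj : j = k
    · subst hj
      have hyj : res x j 4 1 j = 1 := by rw [res_self]; decide
      have hodd : ¬ Odd (x j) := by rw [hk4]; decide
      rw [hyj]
      simp [hodd]
      norm_num
    · rw [Function.update_of_ne hj]
      by_cases hodd : Odd (x j)
      · have h1 : |res x k 4 1 j| ≤ 1 := by
          obtain ⟨a, ha⟩ := hodd
          rw [res_of_ne x hj, abs_bmod _ _ (by norm_num), ha]
          push_cast
          omega
        have h1' : |(res x k 4 1 j : ℝ)| ≤ 1 := by exact_mod_cast h1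
        simpa [ρ, hodd, hj] using h1'
      · have h1' : |(res x k 4 1 j : ℝ)| ≤ 2 := by
          exact_mod_cast (abs_res_four x k j).2.1
        simp only [ρ, hodd, hj, if_false, hcard]
        push_cast
        linarith
  have hsum := Finset.sum_le_sum fun j (_ : j ∈ Finset.univ) => hterm j
  rw [Finset.sum_sub_distrib, hcount, hcard] at hsum
  simp only [Finset.sum_ite_eq', Finset.mem_univ, if_true] at hsum
  rw [hk4] at h8
  norm_num at hsum h8
  linarith

end Lattice

/-- In dimension n = 6, the coordinates of a minimum vector
with respect to a Minkowski-reduced basis have absolute value at most 3. -/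
theorem minvec_coords_le_three_dim_six
    (n : ℕ) (hn : n = 6)
    (b : Fin n → EuclideanSpace ℝ (Fin n)) (hb : LinearIndependent ℝ b)
    (L : Set (EuclideanSpace ℝ (Fin n)))
    (hL : L = {v | ∃ c : Fin n → ℤ, v = ∑ i, (c i : ℝ) • b i})
    (hred : ∀ (i : Fin n) (c : Fin n → ℤ),
      Finset.gcd (Finset.univ.filter fun j => i ≤ j) c = 1 →
      ‖b i‖ ≤ ‖∑ j, (c j : ℝ) • b j‖)
    (m : EuclideanSpace ℝ (Fin n)) (hmL : m ∈ L) (hm0 : m ≠ 0)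
    (hmin : ∀ w ∈ L, w ≠ 0 → ‖m‖ ≤ ‖w‖)
    (x : Fin n → ℤ) (hx : m = ∑ i, (x i : ℝ) • b i) :
    ∀ i : Fin n, |x i| ≤ 3 := by
  subst hn
  let T : (Fin 6 → ℤ) →+ EuclideanSpace ℝ (Fin 6) :=
    { toFun := fun c => ∑ j, (c j : ℝ) • b j
      map_zero' := by simp
      map_add' := fun c c' => by simp [add_smul, Finset.sum_add_distrib] }
  have hTdef : ∀ c, T c = ∑ j, (c j : ℝ) • b j := fun _ => rfl
  have hTsingle : ∀ i, T (Pi.single i 1) = b i := by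
    intro i
    rw [hTdef, Finset.sum_eq_single i]
    · simp
    · intro j _ hj
      simp [hj]
    · simp
  have hTne : ∀ c, c ≠ 0 → T c ≠ 0 := by
    intro c hc h
    refine hc (funext fun j => ?_)
    exact_mod_cast Fintype.linearIndependent_iff.1 hb (fun j => (c j : ℝ)) h j
  have hT : IsRed T := by
    intro i c hc
    rw [hTsingle]
    refine pow_le_pow_left₀ (norm_nonneg _) (hred i c ?_) 2
    have hunit := hc (Finset.gcd (Finset.univ.filter fun j => i ≤ j) c)
      fun j hj => Finset.gcd_dvd (by simpa using hj)
    rw [← Finset.normalize_gcd]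
    exact normalize_eq_one.2 hunit
  have hTx : T x = m := hx.symm
  have hpos : 0 < ‖T x‖ ^ 2 := by
    rw [hTx]
    have := norm_pos_iff.2 hm0
    positivity
  have hmin' : ∀ w, w ≠ 0 → ‖T x‖ ^ 2 ≤ ‖T w‖ ^ 2 := by
    intro w hw
    rw [hTx]
    exact pow_le_pow_left₀ (norm_nonneg _) (hmin (T w) (by rw [hL]; exact ⟨w, rfl⟩) (hTne w hw)) 2
  intro i
  rw [abs_le]
  have h1 := hT.coord_le_three x hpos hmin' i
  have h2 := hT.coord_le_three (-x) (by simpa using hpos) (by simpa using hmin') i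
  simp only [Pi.neg_apply] at h2
  constructor <;> linarith
end

section
/- Each of the vectors e₁, …, e₉ has Euclidean norm 1, and every nonzero vector v of the lattice L (the set of integer linear combinations of e₁, …, e₉) satisfies ‖v‖ ≥ 1; hence the minimum of L equals 1 and e₁, …, e₉ are minimum vectors of L. -/
/-!
For `v = ∑ cᵢ eᵢ`, the number `36 ‖v‖²` is an integral sum of twelve squares in the `cᵢ`
(`a = c₁`, `b = c₈`, `c = c₉`, and the other six coefficients):
`9(a+b)² + 3(3a+2c)² + 9∑(2xᵢ+b)² + 4∑(3yᵢ+c)² + 4c² + (2c-3b)²`.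
The lower bound `36` for this form away from the origin is `thirty_six_le`.

* If `3 ∤ c`, then each `3yᵢ+c` is nonzero, so the terms in `3yᵢ+c` and `c` contribute at least
  `20`. For odd `b` the two terms `2xᵢ+b` contribute another `18`. For even `b` the number
  `2c-3b` is even and nonzero, contributing `4`, and the remaining `12` comes from
  `9(a+b)² + 3(3a+2c)²`: both numbers are odd if `a` is odd, and `3a+2c` is even and nonzero
  if `a` is even.
* If `3 ∣ c` and `c ≠ 0`, then `4c² ≥ 36`.
* If `c = 0`, the form is `9(a+b)² + 27a² + 9b² + 9∑(2xᵢ+b)² + 36∑yᵢ²`, which is treated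
  according to whether `b` is odd, zero, or even and nonzero.
-/

/-- The 12×9 matrix whose columns are the lattice basis vectors e₁, …, e₉. -/
noncomputable def Emat : Matrix (Fin 12) (Fin 9) ℝ :=
  !![1/2, 0, 0, 0, 0, 0, 0, 1/2,  0  ;
     1/2, 0, 0, 0, 0, 0, 0, 0,    1/3;
     1/2, 0, 0, 0, 0, 0, 0, 0,    1/3;
     1/2, 0, 0, 0, 0, 0, 0, 0,    1/3;
     0,   1, 0, 0, 0, 0, 0, 1/2,  0  ;
     0,   0, 1, 0, 0, 0, 0, 1/2,  0  ;
     0,   0, 0, 1, 0, 0, 0, 0,    1/3;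
     0,   0, 0, 0, 1, 0, 0, 0,    1/3;
     0,   0, 0, 0, 0, 1, 0, 0,    1/3;
     0,   0, 0, 0, 0, 0, 1, 0,    1/3;
     0,   0, 0, 0, 0, 0, 0, 0,    1/3;
     0,   0, 0, 0, 0, 0, 0, -1/2, 1/3]

theorem sq_ge_one {n : ℤ} (h : n ≠ 0) : 1 ≤ n ^ 2 := by
  have := sq_pos_of_ne_zero h
  lia

theorem sq_ge_four {n : ℤ} (h : n ≠ 0) (h2 : n % 2 = 0) : 4 ≤ n ^ 2 := by
  obtain ⟨k, rfl⟩ := Int.dvd_of_emod_eq_zero h2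
  have : 1 ≤ k ^ 2 := sq_ge_one (by rintro rfl; simp at h)
  linarith [mul_pow 2 k 2]

/-- The integral form `36 ‖v‖²` is at least `36` away from the origin; `a`, `b`, `c` are the
coefficients of `e₁`, `e₈`, `e₉`, and `x₁, x₂`, `y₁, …, y₄` those of `e₂, …, e₇`. -/
theorem thirty_six_le (a x₁ x₂ y₁ y₂ y₃ y₄ b c : ℤ)
    (h : ¬ (a = 0 ∧ x₁ = 0 ∧ x₂ = 0 ∧ y₁ = 0 ∧ y₂ = 0 ∧ y₃ = 0 ∧ y₄ = 0 ∧ b = 0 ∧ c = 0)) :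
    36 ≤ 9 * (a + b) ^ 2 + 3 * (3 * a + 2 * c) ^ 2 + 9 * (2 * x₁ + b) ^ 2
      + 9 * (2 * x₂ + b) ^ 2 + 4 * (3 * y₁ + c) ^ 2 + 4 * (3 * y₂ + c) ^ 2
      + 4 * (3 * y₃ + c) ^ 2 + 4 * (3 * y₄ + c) ^ 2 + 4 * c ^ 2 + (2 * c - 3 * b) ^ 2 := by
  have p1 := sq_nonneg (a + b)
  have p2 := sq_nonneg (3 * a + 2 * c)
  have p3 := sq_nonneg (2 * x₁ + b)
  have p4 := sq_nonneg (2 * x₂ + b)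
  have p5 := sq_nonneg (3 * y₁ + c)
  have p6 := sq_nonneg (3 * y₂ + c)
  have p7 := sq_nonneg (3 * y₃ + c)
  have p8 := sq_nonneg (3 * y₄ + c)
  have p9 := sq_nonneg (2 * c - 3 * b)
  by_cases hc3 : c % 3 = 0
  · by_cases hc : c = 0
    · subst hc
      by_cases hy : y₁ = 0 ∧ y₂ = 0 ∧ y₃ = 0 ∧ y₄ = 0
      · by_cases hb : b = 0
        · subst hb
          have : a ≠ 0 ∨ x₁ ≠ 0 ∨ x₂ ≠ 0 := by lia
          have q1 := sq_nonneg a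
          have q2 := sq_nonneg x₁
          have q3 := sq_nonneg x₂
          rcases this with h | h | h <;> have := sq_ge_one h <;> linarith
        · by_cases hb2 : b % 2 = 0
          · have := sq_ge_four hb hb2
            -- `9(a+b)² + 27a² = 9(2a + b/2)² + (27/4)b²`
            have q := sq_nonneg (4 * a + b)
            linarith
          · have r1 : 1 ≤ (2 * x₁ + b) ^ 2 := sq_ge_one (by lia)
            have r2 : 1 ≤ (2 * x₂ + b) ^ 2 := sq_ge_one (by lia)
            have r3 := sq_ge_one hb
            by_cases ha : a = 0
            · subst ha
              linarith
            · have r4 := sq_ge_one ha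
              linarith
      · have : y₁ ≠ 0 ∨ y₂ ≠ 0 ∨ y₃ ≠ 0 ∨ y₄ ≠ 0 := by lia
        rcases this with h | h | h | h <;> have := sq_ge_one h <;> linarith
    · obtain ⟨k, rfl⟩ := Int.dvd_of_emod_eq_zero hc3
      have : 1 ≤ k ^ 2 := sq_ge_one (by rintro rfl; simp at hc)
      linarith [mul_pow 3 k 2]
  · have r1 : 1 ≤ (3 * y₁ + c) ^ 2 := sq_ge_one (by lia)
    have r2 : 1 ≤ (3 * y₂ + c) ^ 2 := sq_ge_one (by lia)
    have r3 : 1 ≤ (3 * y₃ + c) ^ 2 := sq_ge_one (by lia)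
    have r4 : 1 ≤ (3 * y₄ + c) ^ 2 := sq_ge_one (by lia)
    have r5 : 1 ≤ c ^ 2 := sq_ge_one (by lia)
    by_cases hb2 : b % 2 = 0
    · have r6 : 4 ≤ (2 * c - 3 * b) ^ 2 := sq_ge_four (by lia) (by lia)
      by_cases ha2 : a % 2 = 0
      · have r7 : 4 ≤ (3 * a + 2 * c) ^ 2 := sq_ge_four (by lia) (by lia)
        linarith
      · have r7 : 1 ≤ (a + b) ^ 2 := sq_ge_one (by lia)
        have r8 : 1 ≤ (3 * a + 2 * c) ^ 2 := sq_ge_one (by lia)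
        linarith
    · have r6 : 1 ≤ (2 * x₁ + b) ^ 2 := sq_ge_one (by lia)
      have r7 : 1 ≤ (2 * x₂ + b) ^ 2 := sq_ge_one (by lia)
      linarith

/-- each eᵢ has norm 1, every nonzero lattice vector has norm ≥ 1,
hence the minimum of L equals 1 and the eᵢ are minimum vectors. -/
theorem example_lattice_minimum_one
    (e : Fin 9 → EuclideanSpace ℝ (Fin 12))
    (he : ∀ (i : Fin 9) (j : Fin 12), e i j = Emat j i)
    (L : Set (EuclideanSpace ℝ (Fin 12)))
    (hL : L = {v | ∃ c : Fin 9 → ℤ, v = ∑ i, (c i : ℝ) • e i}) :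
    (∀ i, ‖e i‖ = 1) ∧
    (∀ v ∈ L, v ≠ 0 → 1 ≤ ‖v‖) ∧
    (∀ i, e i ∈ L ∧ e i ≠ 0 ∧ ∀ w ∈ L, w ≠ 0 → ‖e i‖ ≤ ‖w‖) := by
  have hnorm : ∀ i, ‖e i‖ = 1 := by
    intro i
    rw [EuclideanSpace.norm_eq, Real.sqrt_eq_one]
    simp only [he, Real.norm_eq_abs, sq_abs]
    fin_cases i <;> simp [Emat, Fin.sum_univ_succ] <;> norm_num
  have hmin : ∀ v ∈ L, v ≠ 0 → 1 ≤ ‖v‖ := by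
    intro v hv hv0
    rw [hL] at hv
    obtain ⟨c, rfl⟩ := hv
    have key := thirty_six_le (c 0) (c 1) (c 2) (c 3) (c 4) (c 5) (c 6) (c 7) (c 8) (by
      rintro ⟨h0, h1, h2, h3, h4, h5, h6, h7, h8⟩
      apply hv0
      refine Finset.sum_eq_zero fun i _ => ?_
      fin_cases i <;> simp [*])
    rw [EuclideanSpace.norm_eq, Real.one_le_sqrt]
    have key' := (Int.cast_le (R := ℝ)).2 key
    push_cast at key'
    simp only [Real.norm_eq_abs, sq_abs, WithLp.ofLp_sum, WithLp.ofLp_smul, Finset.sum_apply,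
      Pi.smul_apply, he, smul_eq_mul]
    simp [Emat, Fin.sum_univ_succ]
    linarith
  refine ⟨hnorm, hmin, fun i => ⟨?_, ?_, fun w hw hw0 => (hnorm i).trans_le (hmin w hw hw0)⟩⟩
  · rw [hL]
    refine ⟨Pi.single i 1, ?_⟩
    simp [Pi.single_apply]
  · intro h
    simpa [h] using hnorm i
end

section
/- The system {e₁, …, e₇, e₈⋆} is primitive in L: every vector v ∈ L that lies in the real linear span of e₁, …, e₇, e₈⋆ is an integer linear combination of e₁, …, e₇, e₈⋆. Equivalently, if v = x₁e₁ + ⋯ + x₉e₉ with x ∈ ℤ⁹ lies in the real span of e₁, …, e₇, e₈⋆, then 2 divides x₈ and 3 divides x₉. -/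
/-- the system {e₁, …, e₇, e₈⋆} is primitive in L: every lattice
vector in its real linear span is an integer linear combination of it;
equivalently, if v = x₁e₁ + ⋯ + x₉e₉ lies in the span then 2 ∣ x₈ and 3 ∣ x₉. -/
theorem primitive_system_e8star
    (e : Fin 9 → EuclideanSpace ℝ (Fin 12))
    (he : ∀ (i : Fin 9) (j : Fin 12), e i j = Emat j i)
    (L : Set (EuclideanSpace ℝ (Fin 12)))
    (hL : L = {v | ∃ c : Fin 9 → ℤ, v = ∑ i, (c i : ℝ) • e i})
    (e8s : EuclideanSpace ℝ (Fin 12))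
    (he8s : e8s = (-2 : ℝ) • e 0 - e 1 - e 2 - e 3 - e 4 - e 5 - e 6
      + (2 : ℝ) • e 7 + (3 : ℝ) • e 8)
    (f : Fin 8 → EuclideanSpace ℝ (Fin 12))
    (hf : f = ![e 0, e 1, e 2, e 3, e 4, e 5, e 6, e8s])
    (v : EuclideanSpace ℝ (Fin 12)) (x : Fin 9 → ℤ)
    (hv : v = ∑ i, (x i : ℝ) • e i)
    (hvspan : v ∈ Submodule.span ℝ (Set.range f)) :
    (∃ y : Fin 8 → ℤ, v = ∑ i, (y i : ℝ) • f i) ∧ 2 ∣ x 7 ∧ 3 ∣ x 8 := by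
  subst hf
  obtain ⟨c, hc⟩ := (Submodule.mem_span_range_iff_exists_fun ℝ).1 hvspan
  rw [hv] at hc
  -- The 12th coordinate vanishes on the whole span; this forces `3 x₈ = 2 x₉`.
  have h11 := congrArg (fun w : EuclideanSpace ℝ (Fin 12) => w 11) hc
  simp [Fin.sum_univ_succ, he8s, he, Emat] at h11
  have h : (3 * x 7 : ℤ) = 2 * x 8 := by
    have : (3 * x 7 : ℝ) = 2 * x 8 := by linarith
    exact_mod_cast this
  obtain ⟨k, hk7, hk8⟩ : ∃ k : ℤ, x 7 = 2 * k ∧ x 8 = 3 * k :=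
    ⟨x 8 - x 7, by omega, by omega⟩
  refine ⟨⟨![x 0 + 2 * k, x 1 + k, x 2 + k, x 3 + k, x 4 + k, x 5 + k, x 6 + k, k], ?_⟩,
    ⟨k, hk7⟩, ⟨k, hk8⟩⟩
  rw [hv, Fin.sum_univ_eight, Fin.sum_univ_castSucc, Fin.sum_univ_eight]
  change (x 0 : ℝ) • e 0 + (x 1 : ℝ) • e 1 + (x 2 : ℝ) • e 2 + (x 3 : ℝ) • e 3
      + (x 4 : ℝ) • e 4 + (x 5 : ℝ) • e 5 + (x 6 : ℝ) • e 6 + (x 7 : ℝ) • e 7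
      + (x 8 : ℝ) • e 8
    = ((x 0 + 2 * k : ℤ) : ℝ) • e 0 + ((x 1 + k : ℤ) : ℝ) • e 1 + ((x 2 + k : ℤ) : ℝ) • e 2
      + ((x 3 + k : ℤ) : ℝ) • e 3 + ((x 4 + k : ℤ) : ℝ) • e 4 + ((x 5 + k : ℤ) : ℝ) • e 5
      + ((x 6 + k : ℤ) : ℝ) • e 6 + (k : ℝ) • e8s
  rw [hk7, hk8, he8s]
  push_cast
  module
end

section
/- If v ∈ L is any vector such that the set of integer linear combinations of e₁, …, e₇, e₈⋆, v equals L (i.e., v completes e₁, …, e₇, e₈⋆ to a basis of L), then ‖v‖² ≥ 7/6; in particular ‖v‖ > 1. -/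
/-- A nonzero integer multiple of `1 / k` has square at least `1 / k ^ 2`. -/
lemma sq_lower_bound (n : ℤ) (hn : n ≠ 0) (k x : ℝ) (hx : x = n / k) :
    1 / k ^ 2 ≤ x ^ 2 := by
  have h : (1 : ℝ) ≤ (n : ℝ) ^ 2 := by
    have : (1 : ℤ) ≤ n ^ 2 := by
      have : 0 < n ^ 2 := by positivity
      omega
    exact_mod_cast this
  rw [hx, div_pow]
  gcongr

/-- any vector v completing e₁, …, e₇, e₈⋆ to a basis of L
satisfies ‖v‖² ≥ 7/6; in particular ‖v‖ > 1. -/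
theorem completing_vector_long
    (e : Fin 9 → EuclideanSpace ℝ (Fin 12))
    (he : ∀ (i : Fin 9) (j : Fin 12), e i j = Emat j i)
    (L : Set (EuclideanSpace ℝ (Fin 12)))
    (hL : L = {v | ∃ c : Fin 9 → ℤ, v = ∑ i, (c i : ℝ) • e i})
    (e8s : EuclideanSpace ℝ (Fin 12))
    (he8s : e8s = (-2 : ℝ) • e 0 - e 1 - e 2 - e 3 - e 4 - e 5 - e 6
      + (2 : ℝ) • e 7 + (3 : ℝ) • e 8)
    (v : EuclideanSpace ℝ (Fin 12)) (hvL : v ∈ L)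
    (g : Fin 9 → EuclideanSpace ℝ (Fin 12))
    (hg : g = ![e 0, e 1, e 2, e 3, e 4, e 5, e 6, e8s, v])
    (hgen : {w | ∃ y : Fin 9 → ℤ, w = ∑ i, (y i : ℝ) • g i} = L) :
    7 / 6 ≤ ‖v‖ ^ 2 ∧ 1 < ‖v‖ := by
  have hw : e 7 + e 8 ∈ L := by
    rw [hL]
    refine ⟨![0, 0, 0, 0, 0, 0, 0, 1, 1], ?_⟩
    simp [Fin.sum_univ_succ]
  rw [← hgen] at hw
  obtain ⟨y, hy⟩ := hw
  rw [hL] at hvL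
  obtain ⟨c, hc⟩ := hvL
  have hv : ∀ j, v j = ∑ i, (c i : ℝ) * Emat j i := by
    intro j
    rw [hc]
    simp [he]
  -- The last coordinate of `e 7 + e 8` is `-1/6`; among the generators only `v` contributes to it.
  have hd : y 8 * (2 * c 8 - 3 * c 7) = -1 := by
    have h11 := congrArg (fun x : EuclideanSpace ℝ (Fin 12) => x 11) hy
    have hv11 := hv 11
    simp [Fin.sum_univ_succ, hg, he8s, he, Emat] at h11 hv11
    rw [hv11] at h11
    have : (y 8 : ℝ) * (2 * c 8 - 3 * c 7) = -1 := by
      linarith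
    exact_mod_cast this
  have hu : 2 * c 8 - 3 * c 7 = 1 ∨ 2 * c 8 - 3 * c 7 = -1 := by
    apply Int.isUnit_iff.mp
    exact IsUnit.of_mul_eq_one (-y 8) (by linarith)
  have hcoord : ∀ (j : Fin 12) (n : ℤ) (k : ℕ), n ≠ 0 →
      ∑ i, (c i : ℝ) * Emat j i = n / k → 1 / (k : ℝ) ^ 2 ≤ v j ^ 2 :=
    fun j n k hn h => sq_lower_bound n hn k (v j) ((hv j).trans h)
  have h1 := hcoord 1 (3 * c 0 + 2 * c 8) 6 (by omega)
    (by simp [Fin.sum_univ_succ, Emat]; ring)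
  have h2 := hcoord 2 (3 * c 0 + 2 * c 8) 6 (by omega)
    (by simp [Fin.sum_univ_succ, Emat]; ring)
  have h3 := hcoord 3 (3 * c 0 + 2 * c 8) 6 (by omega)
    (by simp [Fin.sum_univ_succ, Emat]; ring)
  have h4 := hcoord 4 (2 * c 1 + c 7) 2 (by omega)
    (by simp [Fin.sum_univ_succ, Emat]; ring)
  have h5 := hcoord 5 (2 * c 2 + c 7) 2 (by omega)
    (by simp [Fin.sum_univ_succ, Emat]; ring)
  have h6 := hcoord 6 (3 * c 3 + c 8) 3 (by omega)
    (by simp [Fin.sum_univ_succ, Emat]; ring)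
  have h7 := hcoord 7 (3 * c 4 + c 8) 3 (by omega)
    (by simp [Fin.sum_univ_succ, Emat]; ring)
  have h8 := hcoord 8 (3 * c 5 + c 8) 3 (by omega)
    (by simp [Fin.sum_univ_succ, Emat]; ring)
  have h9 := hcoord 9 (3 * c 6 + c 8) 3 (by omega)
    (by simp [Fin.sum_univ_succ, Emat]; ring)
  have h10 := hcoord 10 (c 8) 3 (by omega)
    (by simp [Fin.sum_univ_succ, Emat]; ring)
  have h11 := hcoord 11 (2 * c 8 - 3 * c 7) 6 (by omega)
    (by simp [Fin.sum_univ_succ, Emat]; ring)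
  have hsq : 7 / 6 ≤ ‖v‖ ^ 2 := by
    rw [EuclideanSpace.real_norm_sq_eq]
    simp only [Fin.sum_univ_succ, Fin.sum_univ_zero]
    have h0 := sq_nonneg (v 0)
    norm_num at h1 h2 h3 h4 h5 h6 h7 h8 h9 h10 h11
    simp
    linarith!
  exact ⟨hsq, by nlinarith [norm_nonneg v]⟩
end

section
/- Set e₉⋆ := −e₁ + e₈ + e₉. Then (e₁, …, e₇, e₈⋆, e₉⋆) is a basis of L (these nine vectors are linearly independent and their integer linear combinations are exactly L), and this basis is Minkowski-reduced: writing (b₁, …, b₉) = (e₁, …, e₇, e₈⋆, e₉⋆), for every i ∈ {1, …, 9} and every x ∈ ℤ⁹ with gcd(xᵢ, xᵢ₊₁, …, x₉) = 1 one has ‖x₁b₁ + ⋯ + x₉b₉‖ ≥ ‖bᵢ‖. -/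
/-- 36 times the squared norm of the vector with coefficients `(a, p, q, r, s, t, w, u, v)` in the
basis `(e₁, …, e₇, e₈⋆, e₉⋆)`. -/
def normForm (a p q r s t w u v : ℤ) : ℤ :=
  36 * a ^ 2 - 18 * a * v + 4 * v ^ 2 + 9 * ((2 * p + v) ^ 2 + (2 * q + v) ^ 2)
    + 4 * ((3 * r + v) ^ 2 + (3 * s + v) ^ 2 + (3 * t + v) ^ 2 + (3 * w + v) ^ 2
      + (3 * u + v) ^ 2)

lemma one_le_sq_of_ne_zero {x : ℤ} (hx : x ≠ 0) : 1 ≤ x ^ 2 := by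
  have := sq_pos_of_ne_zero hx
  omega

lemma normForm_of_unit {v : ℤ} (hv : v = 1 ∨ v = -1) (a p q r s t w u : ℤ) :
    42 ≤ normForm a p q r s t w u v := by
  have h2 : ∀ x : ℤ, 1 ≤ (2 * x + v) ^ 2 := fun x => one_le_sq_of_ne_zero (by omega)
  have h3 : ∀ x : ℤ, 1 ≤ (3 * x + v) ^ 2 := fun x => one_le_sq_of_ne_zero (by omega)
  -- Integrality of `a` gives `|a| ≤ a²`, so the mixed term `18av` cannot beat `36a²`.
  have ha : a ≤ a ^ 2 := Int.le_self_sq a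
  have ha' : -a ≤ a ^ 2 := by simpa using Int.le_self_sq (-a)
  have := h2 p; have := h2 q
  have := h3 r; have := h3 s; have := h3 t; have := h3 w; have := h3 u
  have := sq_nonneg a
  unfold normForm
  rcases hv with rfl | rfl <;> linarith

lemma normForm_of_ne_zero {a p q r s t w u v : ℤ}
    (h : ¬ (a = 0 ∧ p = 0 ∧ q = 0 ∧ r = 0 ∧ s = 0 ∧ t = 0 ∧ w = 0 ∧ u = 0 ∧ v = 0)) :
    36 ≤ normForm a p q r s t w u v := by
  have n2 : ∀ x : ℤ, 0 ≤ (2 * x + v) ^ 2 := fun x => sq_nonneg _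
  have n3 : ∀ x : ℤ, 0 ≤ (3 * x + v) ^ 2 := fun x => sq_nonneg _
  have n2p := n2 p; have n2q := n2 q
  have n3r := n3 r; have n3s := n3 s; have n3t := n3 t; have n3w := n3 w; have n3u := n3 u
  by_cases hv : 25 ≤ v ^ 2
  · unfold normForm
    nlinarith [sq_nonneg (4 * a - v)]
  · have hlo : -5 < v := by nlinarith
    have hhi : v < 5 := by nlinarith
    -- Products of consecutive integers are nonnegative; in the cases below `k` is chosen next to
    -- the minimizer `a = v / 4` of the binary part.
    have cons : ∀ k : ℤ, 0 ≤ (a - k) * (a - k - 1) := by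
      intro k
      have := Int.le_self_sq (a - k)
      nlinarith
    by_cases h0 : v = 0
    · subst h0
      have hsum : 1 ≤ a ^ 2 + p ^ 2 + q ^ 2 + r ^ 2 + s ^ 2 + t ^ 2 + w ^ 2 + u ^ 2 := by
        by_contra hlt
        have := sq_nonneg a; have := sq_nonneg p; have := sq_nonneg q; have := sq_nonneg r
        have := sq_nonneg s; have := sq_nonneg t; have := sq_nonneg w; have := sq_nonneg u
        have z : ∀ x : ℤ, x ^ 2 ≤ 0 → x = 0 := fun x hx =>
          pow_eq_zero_iff (two_ne_zero) |>.1 (le_antisymm hx (sq_nonneg x))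
        exact h ⟨z _ (by linarith), z _ (by linarith), z _ (by linarith), z _ (by linarith),
          z _ (by linarith), z _ (by linarith), z _ (by linarith), z _ (by linarith), rfl⟩
      unfold normForm
      nlinarith
    by_cases h1 : v = 1 ∨ v = -1
    · exact (by norm_num : (36 : ℤ) ≤ 42).trans (normForm_of_unit h1 a p q r s t w u)
    by_cases h3 : v = 3 ∨ v = -3
    · have o2 : ∀ x : ℤ, 1 ≤ (2 * x + v) ^ 2 := fun x => one_le_sq_of_ne_zero (by omega)
      have := o2 p; have := o2 q
      unfold normForm
      rcases h3 with rfl | rfl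
      · linarith [sq_nonneg (a - 1), cons 0, cons 1]
      · linarith [sq_nonneg (a + 1), cons (-1), cons (-2)]
    · have o3 : ∀ x : ℤ, 1 ≤ (3 * x + v) ^ 2 := fun x => one_le_sq_of_ne_zero (by omega)
      have := o3 r; have := o3 s; have := o3 t; have := o3 w; have := o3 u
      have hcases : v = 2 ∨ v = -2 ∨ v = 4 ∨ v = -4 := by omega
      unfold normForm
      rcases hcases with rfl | rfl | rfl | rfl
      · linarith [cons 0]
      · linarith [cons (-1)]
      · linarith [sq_nonneg (a - 1)]
      · linarith [sq_nonneg (a + 1)]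

/-- with e₉⋆ := −e₁ + e₈ + e₉, the system
(e₁, …, e₇, e₈⋆, e₉⋆) is a basis of L and it is Minkowski-reduced. -/
theorem reduced_basis_of_example_lattice
    (e : Fin 9 → EuclideanSpace ℝ (Fin 12))
    (he : ∀ (i : Fin 9) (j : Fin 12), e i j = Emat j i)
    (L : Set (EuclideanSpace ℝ (Fin 12)))
    (hL : L = {v | ∃ c : Fin 9 → ℤ, v = ∑ i, (c i : ℝ) • e i})
    (e8s : EuclideanSpace ℝ (Fin 12))
    (he8s : e8s = (-2 : ℝ) • e 0 - e 1 - e 2 - e 3 - e 4 - e 5 - e 6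
      + (2 : ℝ) • e 7 + (3 : ℝ) • e 8)
    (e9s : EuclideanSpace ℝ (Fin 12))
    (he9s : e9s = -e 0 + e 7 + e 8)
    (b : Fin 9 → EuclideanSpace ℝ (Fin 12))
    (hb : b = ![e 0, e 1, e 2, e 3, e 4, e 5, e 6, e8s, e9s]) :
    LinearIndependent ℝ b ∧
    {w | ∃ y : Fin 9 → ℤ, w = ∑ i, (y i : ℝ) • b i} = L ∧
    (∀ (i : Fin 9) (c : Fin 9 → ℤ),
      Finset.gcd (Finset.univ.filter fun j => i ≤ j) c = 1 →
      ‖b i‖ ≤ ‖∑ j, (c j : ℝ) • b j‖) := by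
  have hsum : ∀ g : Fin 9 → ℝ, ∑ j, g j • b j =
      !₂[g 0 / 2, g 0 / 2 - g 8 / 6, g 0 / 2 - g 8 / 6, g 0 / 2 - g 8 / 6,
        g 1 + g 8 / 2, g 2 + g 8 / 2, g 3 + g 8 / 3, g 4 + g 8 / 3, g 5 + g 8 / 3,
        g 6 + g 8 / 3, g 7 + g 8 / 3, - g 8 / 6] := by
    intro g
    ext k
    subst hb he8s he9s
    fin_cases k <;> simp [Fin.sum_univ_succ, he, Emat] <;> ring
  have hnorm : ∀ c : Fin 9 → ℤ, 36 * ‖∑ j, (c j : ℝ) • b j‖ ^ 2 =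
      (normForm (c 0) (c 1) (c 2) (c 3) (c 4) (c 5) (c 6) (c 7) (c 8) : ℝ) := by
    intro c
    rw [hsum (fun j => (c j : ℝ)), EuclideanSpace.norm_sq_eq]
    simp [Fin.sum_univ_succ, normForm]
    ring
  have hsingle : ∀ i, ∑ j, ((Pi.single i 1 : Fin 9 → ℤ) j : ℝ) • b j = b i := by
    intro i
    simp [Pi.single_apply]
  have hle : ∀ (i : Fin 9) (c : Fin 9 → ℤ) (m : ℤ),
      36 * ‖b i‖ ^ 2 = m →
      m ≤ normForm (c 0) (c 1) (c 2) (c 3) (c 4) (c 5) (c 6) (c 7) (c 8) →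
      ‖b i‖ ≤ ‖∑ j, (c j : ℝ) • b j‖ := by
    intro i c m hm hc
    have hc' : (m : ℝ) ≤
      (normForm (c 0) (c 1) (c 2) (c 3) (c 4) (c 5) (c 6) (c 7) (c 8) : ℝ) := by exact_mod_cast hc
    rw [← hnorm, ← hm] at hc'
    exact (sq_le_sq₀ (norm_nonneg _) (norm_nonneg _)).1 (by linarith)
  refine ⟨?_, ?_, ?_⟩
  · rw [Fintype.linearIndependent_iff]
    intro g hg
    rw [hsum] at hg
    have hk : ∀ k, _ := fun k => congrArg (fun x : EuclideanSpace ℝ (Fin 12) => x k) hg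
    have k0 := hk 0
    have k4 := hk 4; have k5 := hk 5; have k6 := hk 6; have k7 := hk 7
    have k8 := hk 8; have k9 := hk 9; have k10 := hk 10; have k11 := hk 11
    simp at k0 k4 k5 k6 k7 k8 k9 k10 k11
    intro i
    fin_cases i <;> simp <;> linarith
  · -- `e₈ = e₁ - (e₂ + ⋯ + e₇) - e₈⋆ + 3e₉⋆` and `e₉ = (e₂ + ⋯ + e₇) + e₈⋆ - 2e₉⋆`.
    subst hL hb he8s he9s
    ext x
    constructor
    · rintro ⟨y, rfl⟩
      refine ⟨![y 0 - 2 * y 7 - y 8, y 1 - y 7, y 2 - y 7, y 3 - y 7, y 4 - y 7, y 5 - y 7,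
        y 6 - y 7, 2 * y 7 + y 8, 3 * y 7 + y 8], ?_⟩
      simp [Fin.sum_univ_succ]
      module
    · rintro ⟨y, rfl⟩
      refine ⟨![y 0 + y 7, y 1 - y 7 + y 8, y 2 - y 7 + y 8, y 3 - y 7 + y 8,
        y 4 - y 7 + y 8, y 5 - y 7 + y 8, y 6 - y 7 + y 8, - y 7 + y 8, 3 * y 7 - 2 * y 8], ?_⟩
      simp [Fin.sum_univ_succ]
      module
  · intro i c hc
    by_cases hi : i = 8
    · subst hi
      refine hle 8 c 42 ?_ (normForm_of_unit ?_ _ _ _ _ _ _ _ _)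
      · rw [← hsingle 8, hnorm]
        simp [normForm]
      · have hf : (Finset.univ.filter fun j : Fin 9 => 8 ≤ j) = {8} := by decide
        rw [hf, Finset.gcd_singleton, ← Int.abs_eq_normalize] at hc
        exact eq_or_eq_neg_of_abs_eq hc
    · refine hle i c 36 ?_ (normForm_of_ne_zero ?_)
      · rw [← hsingle i, hnorm]
        fin_cases i <;> simp [normForm] at hi ⊢
      · rintro ⟨h0, h1, h2, h3, h4, h5, h6, h7, h8⟩
        have hz : ∀ j, c j = 0 := by
          intro j
          fin_cases j <;> assumption
        rw [Finset.gcd_eq_zero_iff.2 fun j _ => hz j] at hc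
        exact zero_ne_one hc
end

section
/- Let L be a lattice of dimension 5 in ℝ⁵ with Minkowski-reduced basis (e₁, …, e₅) such that e₁, e₂, e₃, e₄ are minimum vectors of L. Let m = x₁e₁ + ⋯ + x₅e₅ be a minimum vector of L with all coordinates xᵢ ∈ ℤ nonzero, and suppose {e₁, e₂, e₃, m} is a primitive system in L. Then |x₄| ≤ 2. -/
/-!
Let `μ` be the squared minimum of `L`, and write `e₀, …, e₄` for the basis, so that
`m = ∑ xᵢ eᵢ` and the claim is `|x₃| ≤ 2`.

The engine is Watson's identity: for `v = z + ∑ cᵢ bᵢ` with `z ⟂ bᵢ` and `‖bᵢ‖² = μ`,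
`∑ |cᵢ| (‖v - sgn(cᵢ) bᵢ‖² - μ) = (∑ |cᵢ| - 2) ‖v‖² + 2 ‖z‖²`. If `v` and the vectors
`v - sgn(cᵢ) bᵢ` have squared norm at least `μ`, it yields `(2 - ∑ |cᵢ|) μ ≤ 2 ‖z‖²`
(`watson_bound`). Apply this to `v` with all `|cᵢ| ≤ 1/2`, and to `2 v` after reducing its
coordinates: `2 cᵢ` becomes `∓ 2 δᵢ` with `δᵢ = 1/2 - |cᵢ|`. Adding the two inequalities gives
`(6 - k) μ ≤ 12 ‖z‖²` for `k` vectors `bᵢ`, provided neither coset `v + ⟨b⟩` nor `2 v + ⟨b⟩`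
contains a vector of squared norm below `μ` (`doubling_bound`).

* `k = 5`, `z = 0`: a contradiction. Hence, modulo the sublattice spanned by five independent
  minimum vectors, a lattice vector has order at most two. With `e₀, …, e₃, m` this gives
  `|x₄| ≤ 2`; and if `|x₄| = 1`, reducedness makes `e₄` a minimum vector too, so that
  `e₀, e₁, e₂, e₄, m` gives `|x₃| ≤ 2`.
* `k = 4`, `|x₄| = 2`: primitivity makes `x₃` odd. For a suitable `v = e₄ + n e₃`, the component
  `z` of `v` orthogonal to `e₀, e₁, e₂, m` satisfies `‖z‖² ≥ μ / 6`, and that of `e₄` is `x₃ z`.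
  On the other hand `e₄` is not longer than any `(± r₀ e₀ ± ⋯ ± r₃ e₃ ± m) / 2` with
  `rᵢ ∈ {0, 1}`, `rᵢ ≡ xᵢ` mod `2`, and some choice of signs makes this vector's squared norm at
  most `5 μ / 4`. If `|x₃| ≥ 3`, this contradicts `‖e₄‖² ≥ 9 μ / 6`.
-/

section Watson

variable {E : Type*} [NormedAddCommGroup E] [InnerProductSpace ℝ E]

theorem watson_bound_s10 {k : ℕ} (b : Fin k → E) (μ : ℝ)
    (hb : ∀ i, ‖b i‖ ^ 2 = μ) (z : E) (hz : ∀ i, inner ℝ (b i) z = 0) (c : Fin k → ℝ)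
    (h : ∀ n : Fin k → ℤ, μ ≤ ‖z + ∑ i, (c i + n i) • b i‖ ^ 2) :
    (2 - ∑ i, |c i|) * μ ≤ 2 * ‖z‖ ^ 2 := by
  obtain ⟨v, hv⟩ : ∃ v, v = z + ∑ i, c i • b i := ⟨_, rfl⟩
  have hvμ : μ ≤ ‖v‖ ^ 2 := by
    simpa [hv] using h 0
  have hshift : ∀ i (s : ℤ), μ ≤ ‖v + (s : ℝ) • b i‖ ^ 2 := by
    intro i s
    have := h (Pi.single i s)
    have e1 : ∑ j, (c j + ((Pi.single i s : Fin k → ℤ) j : ℝ)) • b j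
        = ∑ j, c j • b j + (s : ℝ) • b i := by
      simp only [add_smul, Finset.sum_add_distrib]
      congr 1
      rw [Finset.sum_eq_single i]
      · simp
      · intro j _ hj
        simp [Pi.single_eq_of_ne hj]
      · simp
    rw [e1, ← add_assoc, ← hv] at this
    exact this
  have hterm : ∀ i, 2 * (c i * inner ℝ v (b i)) ≤ |c i| * ‖v‖ ^ 2 := by
    intro i
    have hp := hshift i 1
    have hm := hshift i (-1)
    rw [norm_add_sq_real, inner_smul_right, norm_smul, mul_pow, hb] at hp hm
    simp at hp hm
    rcases le_total 0 (c i) with hc | hc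
    · rw [abs_of_nonneg hc]
      nlinarith
    · rw [abs_of_nonpos hc]
      nlinarith
  have hsum := Finset.sum_le_sum fun i (_ : i ∈ Finset.univ) => hterm i
  rw [← Finset.mul_sum, ← Finset.sum_mul] at hsum
  have hin : ∑ i, c i * inner ℝ v (b i) = ‖v‖ ^ 2 - ‖z‖ ^ 2 := by
    have h1 : ∑ i, c i * inner ℝ v (b i) = inner ℝ v (∑ i, c i • b i) := by
      simp [inner_sum, inner_smul_right]
    have h2 : ∑ i, c i • b i = v - z := by rw [hv]; abel
    have h3 : inner ℝ v z = ‖z‖ ^ 2 := by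
      rw [hv, inner_add_left, sum_inner]
      simp [inner_smul_left, hz]
    rw [h1, h2, inner_sub_right, h3, real_inner_self_eq_norm_sq]
  rw [hin] at hsum
  rcases le_total 0 (2 - ∑ i, |c i|) with hs | hs
  · nlinarith
  · have : 0 ≤ ‖z‖ ^ 2 := by positivity
    rcases Nat.eq_zero_or_pos k with rfl | hk
    · simp at hs
      linarith
    · have : 0 ≤ μ := by rw [← hb ⟨0, hk⟩]; positivity
      nlinarith

theorem doubling_bound {k : ℕ} (b : Fin k → E) (μ : ℝ)
    (hb : ∀ i, ‖b i‖ ^ 2 = μ) (hμ : 0 ≤ μ) (z : E) (hz : ∀ i, inner ℝ (b i) z = 0)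
    (c : Fin k → ℝ)
    (h1 : ∀ n : Fin k → ℤ, μ ≤ ‖z + ∑ i, (c i + n i) • b i‖ ^ 2)
    (h2 : ∀ n : Fin k → ℤ, μ ≤ ‖(2 : ℝ) • z + ∑ i, (2 * c i + n i) • b i‖ ^ 2) :
    (6 - k : ℝ) * μ ≤ 12 * ‖z‖ ^ 2 := by
  have w1 := watson_bound_s10 b μ hb z hz (fun i => c i - round (c i)) (by
    intro n
    have := h1 (fun i => n i - round (c i))
    push_cast at this
    convert this using 6
    ring)
  -- An integer shift brings `2 * c i` to within `1 - 2 * |c i - round (c i)|` of zero.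
  have hd : ∀ i, ∃ d : ℤ, |2 * c i + d| ≤ 1 - 2 * |c i - round (c i)| := by
    intro i
    have hr := abs_sub_round (c i)
    rcases le_total 0 (c i - round (c i)) with hc | hc
    · refine ⟨-(2 * round (c i) + 1), ?_⟩
      rw [abs_of_nonneg hc] at hr ⊢
      push_cast
      rw [abs_le]
      constructor <;> linarith
    · refine ⟨-(2 * round (c i) - 1), ?_⟩
      rw [abs_of_nonpos hc] at hr ⊢
      push_cast
      rw [abs_le]
      constructor <;> linarith
  choose d hd using hd
  have w2 := watson_bound_s10 b μ hb ((2 : ℝ) • z) (by simp [inner_smul_right, hz])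
    (fun i => 2 * c i + d i) (by
    intro n
    have := h2 (fun i => d i + n i)
    push_cast at this
    convert this using 6
    ring)
  have hs := Finset.sum_le_sum fun i (_ : i ∈ Finset.univ) => hd i
  rw [Finset.sum_sub_distrib, ← Finset.mul_sum] at hs
  simp at hs
  rw [norm_smul, mul_pow] at w2
  norm_num at w2
  nlinarith [mul_le_mul_of_nonneg_right hs hμ]

/-- Some choice of signs makes the norm of a signed sum at most its quadratic mean over all
choices. -/
theorem exists_signs {k : ℕ} (u : Fin k → E) :
    ∃ ε : Fin k → ℤ, (∀ i, ε i = 1 ∨ ε i = -1) ∧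
      ‖∑ i, (ε i : ℝ) • u i‖ ^ 2 ≤ ∑ i, ‖u i‖ ^ 2 := by
  induction k with
  | zero => exact ⟨fun _ => 1, by simp, by simp⟩
  | succ k ih =>
    obtain ⟨ε, h1, h2⟩ := ih (fun i => u i.succ)
    rcases le_total (inner ℝ (u 0) (∑ i, (ε i : ℝ) • u i.succ)) 0 with h | h
    · refine ⟨Fin.cons 1 ε, ?_, ?_⟩
      · intro i
        refine Fin.cases ?_ ?_ i <;> simp [h1]
      · simp only [Fin.sum_univ_succ, Fin.cons_zero, Fin.cons_succ]
        rw [norm_add_sq_real]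
        simp
        linarith
    · refine ⟨Fin.cons (-1) ε, ?_, ?_⟩
      · intro i
        refine Fin.cases ?_ ?_ i <;> simp [h1]
      · simp only [Fin.sum_univ_succ, Fin.cons_zero, Fin.cons_succ]
        rw [norm_add_sq_real]
        simp
        linarith

theorem exists_orthogonal_decomposition {k : ℕ} (b : Fin k → E) (v : E) :
    ∃ (z : E) (c : Fin k → ℝ), v = z + ∑ i, c i • b i ∧ ∀ i, inner ℝ (b i) z = 0 := by
  let K := Submodule.span ℝ (Set.range b)
  have : FiniteDimensional ℝ K := FiniteDimensional.span_of_finite ℝ (Set.finite_range b)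
  obtain ⟨c, hc⟩ := (Submodule.mem_span_range_iff_exists_fun ℝ).1
    (K.starProjection_apply_mem v)
  refine ⟨v - K.starProjection v, c, by rw [hc]; abel, fun i => ?_⟩
  exact (Submodule.mem_orthogonal K _).1 (K.sub_starProjection_mem_orthogonal v) _
    (Submodule.subset_span ⟨i, rfl⟩)

/-- Modulo the span of the minimum vectors `e 0, e 1, e 2, e 3, m`, the lattice vector `e 4` has
order `|x 4|`; that order is at most two. -/
theorem last_coord_le_two (e : Fin 5 → E) (μ : ℝ) (hμ : 0 < μ)
    (hlow : ∀ t : Fin 5 → ℤ, t ≠ 0 → μ ≤ ‖∑ i, (t i : ℝ) • e i‖ ^ 2)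
    (he : ∀ i : Fin 5, i ≠ 4 → ‖e i‖ ^ 2 = μ) (x : Fin 5 → ℤ)
    (hm : ‖∑ i, (x i : ℝ) • e i‖ ^ 2 = μ) (hx : x 4 ≠ 0) : |x 4| ≤ 2 := by
  by_contra hcon
  have hnd : ∀ n : ℤ, 1 + n * x 4 ≠ 0 ∧ 2 + n * x 4 ≠ 0 := by
    intro n
    constructor
    · intro h
      have : x 4 ∣ 1 := ⟨-n, by linarith⟩
      have := Int.le_of_dvd (by norm_num) ((abs_dvd _ _).2 this)
      omega
    · intro h
      have : x 4 ∣ 2 := ⟨-n, by linarith⟩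
      have := Int.le_of_dvd (by norm_num) ((abs_dvd _ _).2 this)
      omega
  have hx' : (x 4 : ℝ) ≠ 0 := by exact_mod_cast hx
  have := doubling_bound ![e 0, e 1, e 2, e 3, ∑ i, (x i : ℝ) • e i] μ
    (by
      intro i
      fin_cases i
      · exact he 0 (by decide)
      · exact he 1 (by decide)
      · exact he 2 (by decide)
      · exact he 3 (by decide)
      · exact hm) hμ.le 0 (by simp)
    ![-(x 0 : ℝ) / x 4, -(x 1 : ℝ) / x 4, -(x 2 : ℝ) / x 4, -(x 3 : ℝ) / x 4, 1 / x 4]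
    (by
      intro n
      have := hlow ![n 0 + n 4 * x 0, n 1 + n 4 * x 1, n 2 + n 4 * x 2, n 3 + n 4 * x 3,
        1 + n 4 * x 4] (fun h => (hnd (n 4)).1 (congrFun h 4))
      convert this using 3
      simp [Fin.sum_univ_five]
      match_scalars <;> field_simp <;> ring)
    (by
      intro n
      have := hlow ![n 0 + n 4 * x 0, n 1 + n 4 * x 1, n 2 + n 4 * x 2, n 3 + n 4 * x 3,
        2 + n 4 * x 4] (fun h => (hnd (n 4)).2 (congrFun h 4))
      convert this using 3
      simp [Fin.sum_univ_five]
      match_scalars <;> field_simp <;> ring)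
  norm_num at this
  linarith

/-- If `x 4 = ± 2`, some half sum of `e 0, …, e 3, m` with coordinate `± 1` at `e 4` is short. -/
theorem exists_short_half_sum (e : Fin 5 → E) (μ : ℝ)
    (he : ∀ i : Fin 5, i ≠ 4 → ‖e i‖ ^ 2 = μ) (x : Fin 5 → ℤ)
    (hm : ‖∑ i, (x i : ℝ) • e i‖ ^ 2 = μ) (hx : x 4 = 2 ∨ x 4 = -2) :
    ∃ t : Fin 5 → ℤ, (t 4 = 1 ∨ t 4 = -1) ∧ ‖∑ i, (t i : ℝ) • e i‖ ^ 2 ≤ 5 / 4 * μ := by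
  have hμ : 0 ≤ μ := by rw [← hm]; positivity
  obtain ⟨ε, h1, h2⟩ := exists_signs
    ![(((x 0 % 2 : ℤ) : ℝ) / 2) • e 0, (((x 1 % 2 : ℤ) : ℝ) / 2) • e 1,
      (((x 2 % 2 : ℤ) : ℝ) / 2) • e 2, (((x 3 % 2 : ℤ) : ℝ) / 2) • e 3,
      (1 / 2 : ℝ) • ∑ i, (x i : ℝ) • e i]
  have hr : ∀ i : Fin 5, i ≠ 4 → ‖(((x i % 2 : ℤ) : ℝ) / 2) • e i‖ ^ 2 ≤ μ / 4 := by
    intro i hi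
    rw [norm_smul, mul_pow, he i hi]
    rcases Int.emod_two_eq_zero_or_one (x i) with h | h
    · rw [h]
      simp
      positivity
    · rw [h]
      norm_num
      linarith
  have hint : ∀ i, ∃ t : ℤ, 2 * t = ε i * (x i % 2) + ε 4 * x i := by
    intro i
    rcases h1 i with h | h <;> rcases h1 4 with h' | h' <;> rw [h, h']
    · exact ⟨(x i % 2 + x i) / 2, by omega⟩
    · exact ⟨(x i % 2 - x i) / 2, by omega⟩
    · exact ⟨(-(x i % 2) + x i) / 2, by omega⟩
    · exact ⟨(-(x i % 2) - x i) / 2, by omega⟩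
  choose t ht using hint
  refine ⟨t, ?_, ?_⟩
  · have h4 := ht 4
    rcases h1 4 with h | h <;> rcases hx with h' | h' <;> rw [h, h'] at h4 <;> omega
  · have ht' : ∀ i, (t i : ℝ) = ((ε i : ℝ) * ((x i % 2 : ℤ) : ℝ) + ε 4 * x i) / 2 := by
      intro i
      have : (2 * t i : ℝ) = (ε i : ℝ) * ((x i % 2 : ℤ) : ℝ) + ε 4 * x i := by
        exact_mod_cast ht i
      linarith
    have hx4 : ((x 4 % 2 : ℤ) : ℝ) = 0 := by
      rcases hx with h | h <;> simp [h]
    have hm4 : ‖(1 / 2 : ℝ) • ∑ i, (x i : ℝ) • e i‖ ^ 2 = μ / 4 := by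
      rw [norm_smul, mul_pow, hm]
      norm_num
      ring
    have heq : ∑ i, (t i : ℝ) • e i = ∑ i, (ε i : ℝ) •
        (![(((x 0 % 2 : ℤ) : ℝ) / 2) • e 0, (((x 1 % 2 : ℤ) : ℝ) / 2) • e 1,
      (((x 2 % 2 : ℤ) : ℝ) / 2) • e 2, (((x 3 % 2 : ℤ) : ℝ) / 2) • e 3,
      (1 / 2 : ℝ) • ∑ i, (x i : ℝ) • e i] : Fin 5 → E) i := by
      simp only [ht', Fin.sum_univ_five, Matrix.cons_val]
      rw [hx4]
      module
    rw [heq]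
    refine h2.trans ?_
    simp only [Fin.sum_univ_five (f := fun i => ‖_‖ ^ 2), Matrix.cons_val]
    rw [hm4]
    linarith [hr 0 (by decide), hr 1 (by decide), hr 2 (by decide), hr 3 (by decide)]

/-- For `x 4 = ± 2` and `x 3` odd, the component of `e 4` orthogonal to `e 0, e 1, e 2, m` is
`x 3` times a vector `z` with `μ / 6 ≤ ‖z‖ ^ 2`. -/
theorem fourth_coord_sq_bound (e : Fin 5 → E) (μ : ℝ) (hμ : 0 < μ)
    (hlow : ∀ t : Fin 5 → ℤ, t ≠ 0 → μ ≤ ‖∑ i, (t i : ℝ) • e i‖ ^ 2)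
    (he : ∀ i : Fin 5, i ≠ 4 → ‖e i‖ ^ 2 = μ) (x : Fin 5 → ℤ)
    (hm : ‖∑ i, (x i : ℝ) • e i‖ ^ 2 = μ) (hx : x 4 = 2 ∨ x 4 = -2) (hodd : x 3 % 2 = 1) :
    (x 3 : ℝ) ^ 2 * (μ / 6) ≤ ‖e 4‖ ^ 2 := by
  -- With this `n`, `e 4 - x 3 • (e 4 + n • e 3)` lies in the span of `e 0, e 1, e 2, m`.
  obtain ⟨n, hn⟩ : ∃ n : ℤ, 1 - x 3 = -(x 4 * n) := by
    rcases hx with h | h <;> rw [h]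
    · exact ⟨(x 3 - 1) / 2, by omega⟩
    · exact ⟨-((x 3 - 1) / 2), by omega⟩
  obtain ⟨z, c, hv, hz⟩ := exists_orthogonal_decomposition
    ![e 0, e 1, e 2, ∑ i, (x i : ℝ) • e i] (e 4 + (n : ℝ) • e 3)
  have hnd : ∀ k : ℤ, 1 + k * x 4 ≠ 0 ∧ (2 + k * x 4 = 0 → 2 * n + k * x 3 ≠ 0) := by
    intro k
    rcases hx with h | h <;> rw [h]
    · refine ⟨by omega, fun hk => ?_⟩
      obtain rfl : k = -1 := by omega
      omega
    · refine ⟨by omega, fun hk => ?_⟩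
      obtain rfl : k = 1 := by omega
      omega
  have key := doubling_bound ![e 0, e 1, e 2, ∑ i, (x i : ℝ) • e i] μ
    (by
      intro i
      fin_cases i
      · exact he 0 (by decide)
      · exact he 1 (by decide)
      · exact he 2 (by decide)
      · exact hm) hμ.le z hz c
    (by
      intro k
      have := hlow ![k 0 + k 3 * x 0, k 1 + k 3 * x 1, k 2 + k 3 * x 2, n + k 3 * x 3,
        1 + k 3 * x 4] (fun h => (hnd (k 3)).1 (congrFun h 4))
      convert this using 3
      have hv' : z = e 4 + (n : ℝ) • e 3
          - ∑ i, c i • (![e 0, e 1, e 2, ∑ i, (x i : ℝ) • e i] : Fin 4 → E) i := by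
        rw [hv]; abel
      rw [hv']
      simp [Fin.sum_univ_five, Fin.sum_univ_four]
      module)
    (by
      intro k
      have := hlow ![k 0 + k 3 * x 0, k 1 + k 3 * x 1, k 2 + k 3 * x 2, 2 * n + k 3 * x 3,
        2 + k 3 * x 4] (fun h => (hnd (k 3)).2 (congrFun h 4) (congrFun h 3))
      convert this using 3
      have hv' : z = e 4 + (n : ℝ) • e 3
          - ∑ i, c i • (![e 0, e 1, e 2, ∑ i, (x i : ℝ) • e i] : Fin 4 → E) i := by
        rw [hv]; abel
      rw [hv']
      simp [Fin.sum_univ_five, Fin.sum_univ_four]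
      module)
  have hz0 := hz 0
  have hz1 := hz 1
  have hz2 := hz 2
  have hz3 := hz 3
  simp only [Matrix.cons_val] at hz0 hz1 hz2 hz3
  have hvz : inner ℝ (e 4 + (n : ℝ) • e 3) z = ‖z‖ ^ 2 := by
    rw [hv, inner_add_left, sum_inner]
    simp [inner_smul_left, hz]
  have hn' : (1 - x 3 : ℝ) = -(x 4 * n) := by exact_mod_cast hn
  have h4 : inner ℝ (e 4) z = x 3 * ‖z‖ ^ 2 := by
    simp only [Fin.sum_univ_five, inner_add_left, inner_smul_left, hz0, hz1, hz2] at hz3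
    simp only [inner_add_left, inner_smul_left] at hvz
    simp at hz3 hvz
    linear_combination (x 3 : ℝ) * hvz - (n : ℝ) * hz3 + inner ℝ (e 4) z * hn'
  have hcs := real_inner_mul_inner_self_le (e 4) z
  rw [h4, real_inner_self_eq_norm_sq, real_inner_self_eq_norm_sq] at hcs
  norm_num at key
  have hzpos : 0 < ‖z‖ ^ 2 := by linarith
  have h5 : (x 3 : ℝ) ^ 2 * ‖z‖ ^ 2 ≤ ‖e 4‖ ^ 2 := by
    refine le_of_mul_le_mul_right ?_ hzpos
    linarith
  have h6 : (x 3 : ℝ) ^ 2 * (μ / 6) ≤ (x 3 : ℝ) ^ 2 * ‖z‖ ^ 2 :=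
    mul_le_mul_of_nonneg_left (by linarith) (sq_nonneg _)
  linarith

end Watson

/-- dim 5, Minkowski-reduced basis (e₁,…,e₅) whose first four
vectors are minimum vectors; m a minimum vector with all coordinates nonzero,
{e₁,e₂,e₃,m} a primitive system.  Then |x₄| ≤ 2. -/
theorem dim5_primitive_case_coord_bound
    (e : Fin 5 → EuclideanSpace ℝ (Fin 5)) (he : LinearIndependent ℝ e)
    (L : Set (EuclideanSpace ℝ (Fin 5)))
    (hL : L = {v | ∃ c : Fin 5 → ℤ, v = ∑ i, (c i : ℝ) • e i})
    (hred : ∀ (i : Fin 5) (c : Fin 5 → ℤ),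
      Finset.gcd (Finset.univ.filter fun j => i ≤ j) c = 1 →
      ‖e i‖ ≤ ‖∑ j, (c j : ℝ) • e j‖)
    (hminvecs : ∀ i : Fin 5, (i : ℕ) < 4 → e i ≠ 0 ∧ ∀ w ∈ L, w ≠ 0 → ‖e i‖ ≤ ‖w‖)
    (m : EuclideanSpace ℝ (Fin 5)) (hmL : m ∈ L) (hm0 : m ≠ 0)
    (hmin : ∀ w ∈ L, w ≠ 0 → ‖m‖ ≤ ‖w‖)
    (x : Fin 5 → ℤ) (hx : m = ∑ i, (x i : ℝ) • e i)
    (hx0 : ∀ i, x i ≠ 0)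
    (f : Fin 4 → EuclideanSpace ℝ (Fin 5))
    (hf : f = ![e 0, e 1, e 2, m])
    (hfind : LinearIndependent ℝ f)
    (hprim : ∀ v ∈ L, v ∈ Submodule.span ℝ (Set.range f) →
      ∃ y : Fin 4 → ℤ, v = ∑ i, (y i : ℝ) • f i) :
    |x 3| ≤ 2 := by
  have hLmem : ∀ t : Fin 5 → ℤ, ∑ i, (t i : ℝ) • e i ∈ L := fun t => by
    rw [hL]; exact ⟨t, rfl⟩
  have hne : ∀ t : Fin 5 → ℤ, t ≠ 0 → ∑ i, (t i : ℝ) • e i ≠ 0 := by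
    intro t ht h
    apply ht
    funext i
    exact_mod_cast Fintype.linearIndependent_iff.1 he (fun i => (t i : ℝ)) h i
  have heL : ∀ i, e i ∈ L := fun i => by
    have := hLmem (Pi.single i 1)
    convert this
    rw [Finset.sum_eq_single i]
    · simp
    · intro j _ hj
      simp [Pi.single_eq_of_ne hj]
    · simp
  have hlow : ∀ t : Fin 5 → ℤ, t ≠ 0 → ‖m‖ ^ 2 ≤ ‖∑ i, (t i : ℝ) • e i‖ ^ 2 := fun t ht =>
    pow_le_pow_left₀ (norm_nonneg _) (hmin _ (hLmem t) (hne t ht)) 2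
  have hnorm : ∀ i : Fin 5, i ≠ 4 → ‖e i‖ ^ 2 = ‖m‖ ^ 2 := by
    intro i hi
    obtain ⟨h1, h2⟩ := hminvecs i (by omega)
    rw [le_antisymm (h2 m hmL hm0) (hmin _ (heL i) h1)]
  have hμ : 0 < ‖m‖ ^ 2 := by
    have := norm_pos_iff.2 hm0
    positivity
  have hfilter : (Finset.univ.filter fun j : Fin 5 => 4 ≤ j) = {4} := by decide
  have hred4 : ∀ t : Fin 5 → ℤ, (t 4 = 1 ∨ t 4 = -1) → ‖e 4‖ ≤ ‖∑ j, (t j : ℝ) • e j‖ := by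
    intro t ht
    apply hred 4 t
    rw [hfilter, Finset.gcd_singleton]
    rcases ht with h | h <;> rw [h] <;> rfl
  have hmx : ‖∑ i, (x i : ℝ) • e i‖ ^ 2 = ‖m‖ ^ 2 := by rw [← hx]
  have hx4 := last_coord_le_two e _ hμ hlow hnorm x hmx (hx0 4)
  have hcases : (x 4 = 1 ∨ x 4 = -1) ∨ (x 4 = 2 ∨ x 4 = -2) := by
    have := abs_le.1 hx4
    have := hx0 4
    omega
  rcases hcases with h4 | h4
  · have he4 : ‖e 4‖ ^ 2 = ‖m‖ ^ 2 := by
      have h1 := hred4 x h4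
      rw [← hx] at h1
      rw [le_antisymm h1 (hmin _ (heL 4) (he.ne_zero 4))]
    have hall : ∀ i, ‖e i‖ ^ 2 = ‖m‖ ^ 2 := by
      intro i
      by_cases hi : i = 4
      · rw [hi, he4]
      · exact hnorm i hi
    -- Exchanging the last two basis vectors turns the bound on the last coordinate into the claim.
    let σ : Equiv.Perm (Fin 5) := Equiv.swap 3 4
    have hσ : ∀ t : Fin 5 → ℤ,
        ∑ i, (t (σ i) : ℝ) • e (σ i) = ∑ i, (t i : ℝ) • e i := fun t =>
      Equiv.sum_comp σ fun i => (t i : ℝ) • e i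
    have := last_coord_le_two (fun i => e (σ i)) (‖m‖ ^ 2) hμ (by
        intro t ht
        have h1 := hlow (fun i => t (σ i)) (by
          intro h0
          apply ht
          funext i
          simpa [σ] using congrFun h0 (σ i))
        rw [← hσ] at h1
        simpa [σ] using h1)
      (fun i _ => hall _) (fun i => x (σ i)) (by rw [hσ x]; exact hmx) (hx0 _)
    simpa [σ] using this
  · have hodd : x 3 % 2 = 1 := by
      by_contra hev
      obtain ⟨a, ha⟩ : ∃ a : ℤ, x 3 = 2 * a := ⟨x 3 / 2, by omega⟩
      obtain ⟨s, hs⟩ : ∃ s : ℤ, x 4 = 2 * s := ⟨x 4 / 2, by omega⟩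
      have ha' : (x 3 : ℝ) = 2 * a := by exact_mod_cast ha
      have hs' : (x 4 : ℝ) = 2 * s := by exact_mod_cast hs
      let g : Fin 4 → ℝ := ![-(x 0 : ℝ) / 2, -(x 1 : ℝ) / 2, -(x 2 : ℝ) / 2, 1 / 2]
      -- The vector `a e₃ + s e₄ = (m - x₀ e₀ - x₁ e₁ - x₂ e₂) / 2` contradicts primitivity.
      have hw : ∑ i, ((![0, 0, 0, a, s] : Fin 5 → ℤ) i : ℝ) • e i = ∑ i, g i • f i := by
        rw [hf, hx]
        simp [g, Fin.sum_univ_five, Fin.sum_univ_four, ha', hs']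
        module
      obtain ⟨y, hy⟩ := hprim _ (hLmem ![0, 0, 0, a, s]) (by
        rw [hw]
        exact (Submodule.mem_span_range_iff_exists_fun ℝ).2 ⟨g, rfl⟩)
      rw [hw] at hy
      have h0 : ∑ i, (g i - y i) • f i = 0 := by
        simp only [sub_smul, Finset.sum_sub_distrib, hy, sub_self]
      have h3 := Fintype.linearIndependent_iff.1 hfind _ h0 3
      simp [g] at h3
      have h3' : (1 : ℝ) = 2 * y 3 := by linarith
      have : (1 : ℤ) = 2 * y 3 := by exact_mod_cast h3'
      omega
    obtain ⟨t, ht, hshort⟩ := exists_short_half_sum e _ hnorm x hmx h4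
    have h1 := fourth_coord_sq_bound e _ hμ hlow hnorm x hmx h4 hodd
    have h2 := pow_le_pow_left₀ (norm_nonneg _) (hred4 t ht) 2
    by_contra hcon
    have h9 : (9 : ℝ) ≤ (x 3 : ℝ) ^ 2 := by
      have : 3 ≤ |x 3| := by omega
      have h9 : 9 ≤ x 3 ^ 2 := by rw [← sq_abs]; nlinarith
      exact_mod_cast h9
    nlinarith
end
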